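/- Let (K, v_K) be a field with a non-trivial real-valued valuation and let (L, v_L) be any field extension of K equipped with a real-valued valuation v_L extending v_K. Let K° and L° be the corresponding rings of integers, so that L° is a K°-algebra. Then the first André–Quillen homology H₁(𝕃_{L°/K°}) of the cotangent complex of K° → L° is a torsion-free L°-module, i.e. no nonzero element of H₁(𝕃_{L°/K°}) is annihilated by a nonzero element of L°. -/

import Mathlib

set_option synthInstance.maxHeartbeats 800000
set_option maxHeartbeats 1600000

noncomputable section

/-- The unit ball (ring of integers) of a real-valued additive semi-valuation. -/
def AddValuation.unitBall {A : Type*} [CommRing A] (v : AddValuation A (WithTop ℝ)) :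
    Subring A where
  carrier := {a | 0 ≤ v a}
  zero_mem' := by simp only [Set.mem_setOf_eq, AddValuation.map_zero]; exact le_top
  one_mem' := by simp only [Set.mem_setOf_eq, AddValuation.map_one]; exact le_refl _
  add_mem' := by
    intro a b ha hb
    exact le_trans (le_min ha hb) (v.map_add a b)
  mul_mem' := by
    intro a b ha hb
    simp only [Set.mem_setOf_eq, AddValuation.map_mul]
    exact add_nonneg ha hb
  neg_mem' := by
    intro a ha
    simpa only [Set.mem_setOf_eq, AddValuation.map_neg] using ha

/-- A real-valued additive valuation on a field is *non-trivial* if it does not vanish on all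
of `K^×`. -/
def AddValuation.IsNontrivial {K : Type*} [Field K] (v : AddValuation K (WithTop ℝ)) : Prop :=
  ∃ x : K, x ≠ 0 ∧ v x ≠ 0

open TensorProduct

theorem tf_abs {R0 R1 C N : Type*} [CommRing R0] [CommRing R1] [CommRing C] [AddCommGroup N]
    [Module C N] (φ : R0 →+* R1) (hφ : φ.Flat) (I : Ideal R0) (g : R1 →+* C)
    (j : I →+ N) (hj : ∀ (r : R0) (x : I), j (r • x) = g (φ r) • j x)
    (hj2 : ∀ x : I, (x : R0) ∈ I ^ 2 → j x = 0)
    (f : R1) (hf : g f = 0) {n : ℕ} (r : Fin n → R1) (x : Fin n → I)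
    (h : ∑ i, r i * φ (x i) ∈ (I ^ 2).map φ ⊔ Ideal.span {f} * I.map φ) :
    ∑ i, g (r i) • j (x i) = 0 := by
  let := φ.toAlgebra
  have : Module.Flat R0 R1 := hφ
  let : Module R1 N := Module.compHom N g
  let : Module R0 N := Module.compHom N (g.comp φ)
  have : IsScalarTower R0 R1 N := ⟨fun a b c => by
    change g (φ a * b) • c = g (φ a) • g b • c
    rw [map_mul, mul_smul]⟩
  let jl : I →ₗ[R0] N := { j with map_smul' := fun a b => hj a b }
  let τ : R1 ⊗[R0] I →ₗ[R1] N := jl.liftBaseChange R1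
  let μ : R1 ⊗[R0] I →ₗ[R1] R1 := ((Algebra.linearMap R0 R1).comp I.subtype).liftBaseChange R1
  have hμ : ∀ a b, μ (a ⊗ₜ b) = a * φ b := fun a b => by simp [μ]; rfl
  have hτ : ∀ a b, τ (a ⊗ₜ b) = g a • j b := fun a b => by simp [τ]; rfl
  have inj : Function.Injective μ := by
    have h1 := Module.Flat.lTensor_preserves_injective_linearMap (M := R1) I.subtype
      I.injective_subtype
    have : ∀ t, μ t = TensorProduct.rid R0 R1 (I.subtype.lTensor R1 t) := by
      intro t
      induction t with
      | zero => simp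
      | add a b ha hb => rw [map_add, ha, hb, map_add, map_add]
      | tmul a b => rw [hμ]; simp [Algebra.smul_def]; rw [mul_comm]; rfl
    intro a b hab
    rw [this, this] at hab
    exact h1 ((TensorProduct.rid R0 R1).injective hab)
  let t : R1 ⊗[R0] I := ∑ i, r i ⊗ₜ x i
  have ht : μ t = ∑ i, r i * φ (x i) := by simp [t, hμ]
  have hle : (I ^ 2).map φ ⊔ Ideal.span {f} * I.map φ ≤ (LinearMap.ker τ).map μ := by
    refine sup_le ?_ ?_
    · rw [Ideal.map_le_iff_le_comap]
      intro y hy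
      refine ⟨1 ⊗ₜ ⟨y, Ideal.pow_le_self two_ne_zero hy⟩, ?_, ?_⟩
      · rw [SetLike.mem_coe, LinearMap.mem_ker, hτ, hj2 _ hy, smul_zero]
      · rw [hμ, one_mul]
    · rw [Ideal.map, Ideal.span_mul_span', Ideal.span_le]
      rintro _ ⟨a, rfl, _, ⟨y, hy, rfl⟩, rfl⟩
      refine ⟨a ⊗ₜ ⟨y, hy⟩, ?_, ?_⟩
      · rw [SetLike.mem_coe, LinearMap.mem_ker, hτ, hf, zero_smul]
      · rw [hμ]
  have := hle h
  rw [← ht] at this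
  obtain ⟨t', ht', e⟩ := this
  have e2 := inj e
  subst e2
  have : τ t = 0 := ht'
  simpa [t, hτ] using this

theorem Algebra.Extension.liftBaseChange_inj {R S T : Type*} [CommRing R] [CommRing S] [Algebra R S]
    [CommRing T] [Algebra R T] [Algebra S T] [IsScalarTower R S T]
    (P : Extension R S) (P' : Extension R T) (h : Extension.Hom P P')
    (hfl : h.toRingHom.Flat) (f' : P'.Ring) (hf' : algebraMap P'.Ring T f' = 0)
    (H : ∀ y ∈ P'.ker ^ 2, y ∈ P.ker.map h.toRingHom →
      y ∈ (P.ker ^ 2).map h.toRingHom ⊔ Ideal.span {f'} * P.ker.map h.toRingHom) :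
    Function.Injective (LinearMap.liftBaseChange T (Extension.Cotangent.map h)) := by
  rw [injective_iff_map_eq_zero]
  intro z hz
  have hz' : ∃ (n : ℕ) (r : Fin n → P'.Ring) (x : Fin n → P.ker),
      z = ∑ i, (algebraMap P'.Ring T (r i)) ⊗ₜ Extension.Cotangent.mk (x i) := by
    clear hz
    induction z with
    | zero => exact ⟨0, Fin.elim0, Fin.elim0, by simp⟩
    | tmul a b =>
      obtain ⟨x, rfl⟩ := Extension.Cotangent.mk_surjective b
      obtain ⟨a, rfl⟩ := P'.algebraMap_surjective a
      exact ⟨1, fun _ => a, fun _ => x, by simp⟩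
    | add a b ha hb =>
      obtain ⟨n, r, x, rfl⟩ := ha
      obtain ⟨m, r', x', rfl⟩ := hb
      exact ⟨n + m, Fin.append r r', Fin.append x x', by simp [Fin.sum_univ_add]⟩
  obtain ⟨n, r, x, rfl⟩ := hz'
  let j : P.ker →+ T ⊗[S] P.Cotangent :=
    { toFun := fun y => 1 ⊗ₜ Extension.Cotangent.mk y
      map_zero' := by simp
      map_add' := fun a b => by rw [map_add, TensorProduct.tmul_add] }
  have hmem : ∀ y : P.ker, h.toRingHom y ∈ P'.ker := by
    intro y
    have : algebraMap P.Ring S y = 0 := y.2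
    change algebraMap P'.Ring T _ = 0
    rw [h.algebraMap_toRingHom, this, map_zero]
  have key : LinearMap.liftBaseChange T (Extension.Cotangent.map h)
      (∑ i, (algebraMap P'.Ring T (r i)) ⊗ₜ Extension.Cotangent.mk (x i)) =
      Extension.Cotangent.mk (∑ i, r i • ⟨h.toRingHom (x i), hmem (x i)⟩) := by
    rw [map_sum, map_sum]
    refine Finset.sum_congr rfl fun i _ => ?_
    rw [LinearMap.liftBaseChange_tmul, Extension.Cotangent.map_mk, map_smul, algebraMap_smul]
    rfl
  rw [key, Extension.Cotangent.mk_eq_zero_iff] at hz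
  have e : ((∑ i, r i • (⟨h.toRingHom (x i), hmem (x i)⟩ : P'.ker) : P'.ker) : P'.Ring) =
      ∑ i, r i * h.toRingHom (x i) := by simp
  rw [e] at hz
  have := tf_abs h.toRingHom hfl P.ker (algebraMap P'.Ring T) j ?_ ?_ f' hf' r x (H _ hz ?_)
  · rw [← this]
    refine Finset.sum_congr rfl fun i _ => ?_
    change _ = _ • (1 ⊗ₜ Extension.Cotangent.mk (x i))
    rw [TensorProduct.smul_tmul', smul_eq_mul, mul_one]
  · intro a y
    change 1 ⊗ₜ Extension.Cotangent.mk (a • y) = _ • (1 ⊗ₜ Extension.Cotangent.mk y)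
    rw [map_smul, h.algebraMap_toRingHom, ← algebraMap_smul S a (Extension.Cotangent.mk y),
      TensorProduct.tmul_smul, algebraMap_smul T]
  · intro y hy
    change 1 ⊗ₜ Extension.Cotangent.mk y = _
    rw [(Extension.Cotangent.mk_eq_zero_iff y).mpr hy, TensorProduct.tmul_zero]
  · exact sum_mem fun i _ => Ideal.mul_mem_left _ _ (Ideal.mem_map_of_mem _ (x i).2)

namespace Algebra.Generators
universe u₁ u₂ u₃ w₁ w₂
variable {R : Type u₁} {S : Type u₂} [CommRing R] [CommRing S] [Algebra R S]
variable {T : Type u₃} [CommRing T] [Algebra R T] [Algebra S T] [IsScalarTower R S T]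
variable {ι : Type w₁} {σ : Type w₂}
variable (Q : Generators S T ι) (P : Generators R S σ)

theorem toComp_flat : ((Q.toComp P).toAlgHom : P.Ring →+* (Q.comp P).Ring).Flat := by
  have h : ((Q.toComp P).toAlgHom : P.Ring →+* (Q.comp P).Ring) =
      ((MvPolynomial.sumAlgEquiv R ι σ).symm : _ →+* _).comp
        (MvPolynomial.C : MvPolynomial σ R →+* MvPolynomial ι (MvPolynomial σ R)) := by
    rw [toComp_toAlgHom]
    refine MvPolynomial.ringHom_ext (fun x => ?_) (fun x => ?_)
    · simp only [RingHom.comp_apply]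
      refine (MvPolynomial.rename_C _ _).trans ?_
      exact (MvPolynomial.sumAlgEquiv_symm_C_C R ι σ x).symm
    · simp only [RingHom.comp_apply]
      refine (MvPolynomial.rename_X _ _).trans ?_
      exact (MvPolynomial.sumAlgEquiv_symm_C_X R ι σ x).symm
  rw [h]
  refine RingHom.Flat.comp ?_ (RingHom.Flat.of_bijective (MvPolynomial.sumAlgEquiv R ι σ).symm.bijective)
  exact (RingHom.flat_algebraMap_iff (R := MvPolynomial σ R) (S := MvPolynomial ι (MvPolynomial σ R))).mpr inferInstance

theorem mem_ker_sq [IsDomain S] (f : Q.Ring) (hf : Q.ker = Ideal.span {f}) :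
    ∃ f' : (Q.comp P).Ring, algebraMap (Q.comp P).Ring T f' = 0 ∧ ∀ y ∈ (Q.comp P).ker ^ 2,
      y ∈ P.ker.map ((Q.toComp P).toAlgHom : P.Ring →+* (Q.comp P).Ring) →
      y ∈ (P.ker ^ 2).map ((Q.toComp P).toAlgHom : P.Ring →+* (Q.comp P).Ring) ⊔
        Ideal.span {f'} * P.ker.map ((Q.toComp P).toAlgHom : P.Ring →+* (Q.comp P).Ring) := by
  obtain ⟨f', hf', hf0⟩ : ∃ f', (Q.ofComp P).toAlgHom f' = f ∧ (f = 0 → f' = 0) := by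
    by_cases h : f = 0
    · exact ⟨0, by simp [h], fun _ => rfl⟩
    · obtain ⟨f', h'⟩ := toAlgHom_ofComp_surjective Q P f
      exact ⟨f', h', fun h0 => absurd h0 h⟩
  set φ : P.Ring →+* (Q.comp P).Ring := ((Q.toComp P).toAlgHom : P.Ring →+* (Q.comp P).Ring) with hφ
  have hker : RingHom.ker (Q.ofComp P).toAlgHom = P.ker.map φ := (map_toComp_ker Q P).symm
  have hJ : (Q.comp P).ker = P.ker.map φ ⊔ Ideal.span {f'} := by
    rw [ker_comp_eq_sup]
    apply le_antisymm
    · refine sup_le le_sup_left ?_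
      intro y hy
      rw [Ideal.mem_comap, hf, Ideal.mem_span_singleton] at hy
      obtain ⟨c, hc⟩ := hy
      obtain ⟨c, rfl⟩ := toAlgHom_ofComp_surjective Q P c
      have : y - f' * c ∈ P.ker.map φ := by
        rw [← hker, RingHom.mem_ker, map_sub, map_mul, hf', hc, sub_self]
      rw [← sub_add_cancel y (f' * c)]
      exact Submodule.add_mem_sup this (Ideal.mul_mem_right _ _ (Ideal.mem_span_singleton_self _))
    · refine sup_le_sup le_rfl ?_
      rw [Ideal.span_singleton_le_iff_mem, Ideal.mem_comap, hf', hf]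
      exact Ideal.mem_span_singleton_self _
  refine ⟨f', ?_, ?_⟩
  · have : f' ∈ (Q.comp P).ker := by
      rw [hJ]; exact Ideal.mem_sup_right (Ideal.mem_span_singleton_self _)
    exact this
  · intro y hy hyI
    rw [hJ, pow_two, Ideal.sup_mul, Ideal.mul_sup, Ideal.mul_sup] at hy
    have : y ∈ ((P.ker ^ 2).map φ ⊔ Ideal.span {f'} * P.ker.map φ) ⊔ Ideal.span {f'} * Ideal.span {f'} := by
      refine (?_ : P.ker.map φ * P.ker.map φ ⊔ P.ker.map φ * Ideal.span {f'} ⊔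
        (Ideal.span {f'} * P.ker.map φ ⊔ Ideal.span {f'} * Ideal.span {f'}) ≤ _) hy
      refine sup_le (sup_le ?_ ?_) (sup_le ?_ ?_)
      · rw [← Ideal.map_mul, ← pow_two]; exact le_sup_left.trans le_sup_left
      · rw [mul_comm]; exact le_sup_right.trans le_sup_left
      · exact le_sup_right.trans le_sup_left
      · exact le_sup_right
    rw [Ideal.span_singleton_mul_span_singleton] at this
    obtain ⟨a, ha, b, hb, rfl⟩ := Submodule.mem_sup.mp this
    obtain ⟨c, rfl⟩ := Ideal.mem_span_singleton.mp hb
    refine add_mem ha ?_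
    have haI : a ∈ P.ker.map φ := by
      refine (?_ : (P.ker ^ 2).map φ ⊔ Ideal.span {f'} * P.ker.map φ ≤ _) ha
      refine sup_le ?_ Ideal.mul_le_right
      exact Ideal.map_mono (Ideal.pow_le_self two_ne_zero)
    have h3 : f' * f' * c ∈ P.ker.map φ := by simpa using sub_mem hyI haI
    by_cases h0 : f = 0
    · rw [hf0 h0]; simp
    · rw [← hker, RingHom.mem_ker, map_mul, map_mul, hf'] at h3
      have hc : c ∈ P.ker.map φ := by
        rw [← hker, RingHom.mem_ker]
        simpa [h0] using h3
      refine Ideal.mem_sup_right ?_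
      rw [mul_assoc]
      exact Ideal.mul_mem_mul (Ideal.mem_span_singleton_self _) (Ideal.mul_mem_left _ _ hc)

theorem liftBaseChange_injective_of_principal [IsDomain S] (f : Q.Ring)
    (hf : Q.ker = Ideal.span {f}) :
    Function.Injective (LinearMap.liftBaseChange T
      (Extension.Cotangent.map (Q.toComp P).toExtensionHom)) := by
  obtain ⟨f', hf', H⟩ := mem_ker_sq Q P f hf
  exact Extension.liftBaseChange_inj P.toExtension (Q.comp P).toExtension _
    (toComp_flat Q P) f' hf' H

end Algebra.Generators

theorem tf_of_exact {C M N : Type*} [CommRing C] [IsDomain C] [AddCommGroup M] [Module C M]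
    [AddCommGroup N] [Module C N] (g : M →ₗ[C] N) [Module.IsTorsionFree C N]
    (h : ∀ (r : C) (m : M), g m = 0 → r • m = 0 → r = 0 ∨ m = 0) : Module.IsTorsionFree C M := by
  rw [Module.isTorsionFree_iff_smul_eq_zero]
  intro r m hrm
  by_cases hr : r = 0
  · exact Or.inl hr
  · have : r • g m = 0 := by rw [← map_smul, hrm, map_zero]
    exact h r m ((smul_eq_zero_iff_right hr).mp this) hrm

theorem Algebra.Extension.cotangent_tf {S T : Type*} [CommRing S] [CommRing T] [Algebra S T]
    [IsDomain T] (Q : Extension S T) [IsDomain Q.Ring] (f : Q.Ring)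
    (hf : Q.ker = Ideal.span {f}) : Module.IsTorsionFree T Q.Cotangent := by
  rw [Module.isTorsionFree_iff_smul_eq_zero]
  intro r m h
  obtain ⟨⟨x, hx⟩, rfl⟩ := Extension.Cotangent.mk_surjective m
  obtain ⟨r, rfl⟩ := Q.algebraMap_surjective r
  rw [algebraMap_smul, ← map_smul, Extension.Cotangent.mk_eq_zero_iff] at h
  have h : r * x ∈ Q.ker ^ 2 := h
  have hx' : x ∈ Q.ker := hx
  rw [hf] at h hx'
  rw [Ideal.span_singleton_pow, Ideal.mem_span_singleton] at h
  rw [Ideal.mem_span_singleton] at hx'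
  obtain ⟨y, rfl⟩ := hx'
  obtain ⟨z, hz⟩ := h
  by_cases h0 : f = 0
  · right
    rw [Extension.Cotangent.mk_eq_zero_iff]
    change f * y ∈ _
    rw [h0, zero_mul]
    exact zero_mem _
  · have e : r * y = f * z := mul_left_cancel₀ h0 (by linear_combination hz)
    have e2 : algebraMap Q.Ring T (r * y) = 0 := by
      have : r * y ∈ Q.ker := by
        rw [hf, e]; exact Ideal.mul_mem_right _ _ (Ideal.mem_span_singleton_self _)
      exact this
    rw [map_mul, mul_eq_zero] at e2
    refine e2.imp_right (fun hy => ?_)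
    rw [Extension.Cotangent.mk_eq_zero_iff]
    change f * y ∈ Q.ker ^ 2
    have hy : y ∈ Q.ker := hy
    rw [pow_two]
    refine Ideal.mul_mem_mul ?_ hy
    rw [hf]; exact Ideal.mem_span_singleton_self _

namespace Algebra.Generators
universe u₁ u₂ u₃ w₁ w₂
variable {R : Type u₁} {S : Type u₂} [CommRing R] [CommRing S] [Algebra R S]
variable {T : Type u₃} [CommRing T] [Algebra R T] [Algebra S T] [IsScalarTower R S T]
variable {ι : Type w₁} {σ : Type w₂}
variable (Q : Generators S T ι) (P : Generators R S σ)

theorem cotangent_tf_iff [IsDomain S] : Module.IsTorsionFree S P.toExtension.Cotangent ↔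
    Module.IsTorsionFree S (H1Cotangent R S) := by
  have e := P.equivH1Cotangent
  have h1 : Module.IsTorsionFree S P.toExtension.H1Cotangent ↔
      Module.IsTorsionFree S (H1Cotangent R S) :=
    ⟨fun h => Function.Injective.moduleIsTorsionFree e.symm e.symm.injective (map_smul e.symm),
     fun h => Function.Injective.moduleIsTorsionFree e e.injective (map_smul e)⟩
  rw [← h1]
  constructor
  · intro h
    exact Function.Injective.moduleIsTorsionFree P.toExtension.h1Cotangentι
      (Extension.h1Cotangentι_injective) (map_smul _)
  · intro h
    have : Module.Free S P.toExtension.CotangentSpace := Module.Free.of_basis P.cotangentSpaceBasis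
    refine tf_of_exact P.toExtension.cotangentComplex ?_
    intro r m hm hr
    let m' : P.toExtension.H1Cotangent := ⟨m, hm⟩
    have hr' : r • m' = 0 := Subtype.ext hr
    have := smul_eq_zero.mp hr'
    exact this.imp_right (fun h => congrArg Subtype.val h)

theorem cotangent_tf_of_principal [IsDomain S] [IsDomain T] (f : Q.Ring)
    (hf : Q.ker = Ideal.span {f}) : Module.IsTorsionFree T Q.toExtension.Cotangent := by
  have : IsDomain Q.toExtension.Ring := inferInstanceAs (IsDomain (MvPolynomial ι S))
  exact Extension.cotangent_tf Q.toExtension f hf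

theorem T_step [IsDomain S] [IsBezout S] [IsDomain T] (f : Q.Ring)
    (hf : Q.ker = Ideal.span {f}) (hS : Module.IsTorsionFree S (H1Cotangent R S)) :
    Module.IsTorsionFree T (H1Cotangent R T) := by
  let P := Generators.self R S
  have h1 : Module.IsTorsionFree S P.toExtension.Cotangent := (cotangent_tf_iff P).mpr hS
  have h2 : Module.Flat S P.toExtension.Cotangent := by
    rw [Module.Flat.flat_iff_torsion_eq_bot_of_isBezout,
      ← Submodule.isTorsionFree_iff_torsion_eq_bot]
    exact h1
  have h3 : Module.IsTorsionFree T (T ⊗[S] P.toExtension.Cotangent) := Module.Flat.isTorsionFree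
  have h4 := cotangent_tf_of_principal Q f hf
  rw [← cotangent_tf_iff (Q.comp P)]
  refine tf_of_exact (Extension.Cotangent.map (Q.ofComp P).toExtensionHom) ?_
  intro r m hm hr
  have := (Generators.Cotangent.exact Q P m).mp hm
  obtain ⟨m, rfl⟩ := this
  rw [← map_smul] at hr
  have hr := (injective_iff_map_eq_zero _).mp (liftBaseChange_injective_of_principal Q P f hf) _ hr
  rw [smul_eq_zero] at hr
  exact hr.imp_right (fun h => by rw [h, map_zero])

theorem J_step [IsDomain S] [IsBezout S] [IsLocalRing S] (f : Q.Ring)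
    (hf : Q.ker = Ideal.span {f}) {V : Type*} [CommRing V] [IsDomain V] [IsLocalRing V] [Algebra S V]
    [Algebra T V] [IsScalarTower S T V] (hinj : Function.Injective (algebraMap S V))
    (hloc : IsLocalHom (algebraMap S V)) (s : T) (hs : IsUnit (algebraMap T V s))
    (m : H1Cotangent R S) (hm : s • H1Cotangent.map R R S T m = 0) : m = 0 := by
  let P := Generators.self R S
  have e : (Q.comp P).equivH1Cotangent (Extension.H1Cotangent.map (Q.toComp P).toExtensionHom m) =
      H1Cotangent.map R R S T m := by
    have h1 := Extension.H1Cotangent.map_comp_apply (Q.toComp P).toExtensionHom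
      (Generators.defaultHom (Q.comp P) (Generators.self R T)).toExtensionHom m
    have h2 := Extension.H1Cotangent.map_eq
      ((Generators.defaultHom (Q.comp P) (Generators.self R T)).toExtensionHom.comp
        (Q.toComp P).toExtensionHom)
      (Generators.defaultHom (Generators.self R S) (Generators.self R T)).toExtensionHom
    exact h1.symm.trans (congrArg (fun F => F m) h2)
  have hm2 : s • Extension.H1Cotangent.map (Q.toComp P).toExtensionHom m = 0 := by
    apply (Q.comp P).equivH1Cotangent.injective
    rw [map_smul, map_zero, ← hm, e]
  have hm3 := congrArg Subtype.val hm2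
  have hm4 : LinearMap.liftBaseChange T (Extension.Cotangent.map (Q.toComp P).toExtensionHom)
      (s ⊗ₜ m.1) = 0 := by
    rw [LinearMap.liftBaseChange_tmul]
    exact hm3
  have hm5 := (injective_iff_map_eq_zero _).mp
    (liftBaseChange_injective_of_principal Q P f hf) _ hm4
  have : Module.Flat S V := by
    rw [Module.Flat.flat_iff_torsion_eq_bot_of_isBezout,
      ← Submodule.isTorsionFree_iff_torsion_eq_bot]
    rw [Module.isTorsionFree_iff_smul_eq_zero]
    intro r m
    rw [Algebra.smul_def, mul_eq_zero, map_eq_zero_iff _ hinj]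
    exact fun h => h
  have : Module.FaithfullyFlat S V := Module.FaithfullyFlat.of_flat_of_isLocalHom
  have h6 : (algebraMap T V s) ⊗ₜ[S] m.1 = 0 := by
    have := congrArg (LinearMap.rTensor P.toExtension.Cotangent
      (IsScalarTower.toAlgHom S T V).toLinearMap) hm5
    simpa using this
  obtain ⟨u, hu⟩ := hs
  have h7 : (1 : V) ⊗ₜ[S] m.1 = 0 := by
    have := congrArg (fun z => (↑u⁻¹ : V) • z) h6
    simpa [TensorProduct.smul_tmul', ← hu] using this
  have h8 := (injective_iff_map_eq_zero _).mp
    (Module.FaithfullyFlat.tensorProduct_mk_injective (A := S) (B := V) P.toExtension.Cotangent) m.1 h7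
  exact Subtype.ext h8

end Algebra.Generators

namespace H1T
open MvPolynomial Algebra

section
variable {A B C D : Type*} [CommRing A] [CommRing B] [CommRing C] [CommRing D]
  [Algebra A B] [Algebra A C] [Algebra A D]

/-- functoriality of `H1Cotangent` along algebra maps -/
noncomputable def hm (f : B →ₐ[A] C) : H1Cotangent A B →+ H1Cotangent A C :=
  letI := f.toRingHom.toAlgebra
  haveI : IsScalarTower A B C := .of_algebraMap_eq' f.comp_algebraMap.symm
  (H1Cotangent.map A A B C).toAddMonoidHom

theorem hm_smul (f : B →ₐ[A] C) (b : B) (m : H1Cotangent A B) : hm f (b • m) = f b • hm f m := by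
  let := f.toRingHom.toAlgebra
  have : IsScalarTower A B C := .of_algebraMap_eq' f.comp_algebraMap.symm
  refine (map_smul (H1Cotangent.map A A B C) b m).trans ?_
  exact (algebraMap_smul C b (H1Cotangent.map A A B C m)).symm

theorem hm_eq [Algebra B C] [IsScalarTower A B C] (f : B →ₐ[A] C)
    (h : ∀ b, algebraMap B C b = f b) (m : H1Cotangent A B) :
    hm f m = H1Cotangent.map A A B C m := by
  have : f.toRingHom.toAlgebra = ‹Algebra B C› := by
    apply Algebra.algebra_ext
    intro r
    exact (h r).symm
  subst this
  rfl

theorem hm_id (m : H1Cotangent A B) : hm (AlgHom.id A B) m = m := by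
  rw [hm_eq (AlgHom.id A B) (fun b => rfl)]
  rw [H1Cotangent.map, Extension.H1Cotangent.map_eq _ (.id _), Extension.H1Cotangent.map_id]
  rfl

theorem hm_comp (f : B →ₐ[A] C) (g : C →ₐ[A] D) (m : H1Cotangent A B) :
    hm (g.comp f) m = hm g (hm f m) := by
  let i1 := f.toRingHom.toAlgebra
  have : IsScalarTower A B C := .of_algebraMap_eq' f.comp_algebraMap.symm
  let i2 := g.toRingHom.toAlgebra
  have : IsScalarTower A C D := .of_algebraMap_eq' g.comp_algebraMap.symm
  let i3 := (g.comp f).toRingHom.toAlgebra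
  have : IsScalarTower A B D := .of_algebraMap_eq' (g.comp f).comp_algebraMap.symm
  have : IsScalarTower B C D := .of_algebraMap_eq' rfl
  rw [hm_eq (g.comp f) (fun b => rfl), hm_eq g (fun b => rfl), hm_eq f (fun b => rfl)]
  have h1 := Extension.H1Cotangent.map_comp_apply
    (Generators.defaultHom (Generators.self A B) (Generators.self A C)).toExtensionHom
    (Generators.defaultHom (Generators.self A C) (Generators.self A D)).toExtensionHom m
  refine Eq.trans ?_ h1
  exact congrArg (fun F => F m) (Extension.H1Cotangent.map_eq
    (Generators.defaultHom (Generators.self A B) (Generators.self A D)).toExtensionHom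
    ((Generators.defaultHom (Generators.self A C) (Generators.self A D)).toExtensionHom.comp
    (Generators.defaultHom (Generators.self A B) (Generators.self A C)).toExtensionHom))

theorem ccx_eq_zero (p : (Generators.self A C).toExtension.Ring)
    (hp : p ∈ (Generators.self A C).toExtension.ker) :
    (Generators.self A C).toExtension.cotangentComplex (Extension.Cotangent.mk ⟨p, hp⟩) = 0 ↔
      ∀ c, aeval (id : C → C) (pderiv (R := A) c p) = 0 := by
  rw [Extension.cotangentComplex_mk]
  rw [← (Generators.self A C).cotangentSpaceBasis.repr.map_eq_zero_iff, DFunLike.ext_iff]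
  refine forall_congr' fun c => ?_
  have := Generators.cotangentSpaceBasis_repr_one_tmul (Generators.self A C) p c
  exact Eq.congr_left this

/-- class in `H1` of a polynomial -/
noncomputable def H1mk (p : MvPolynomial C A) (hp : aeval (id : C → C) p = 0)
    (hd : ∀ c, aeval (id : C → C) (pderiv c p) = 0) : H1Cotangent A C :=
  ⟨Extension.Cotangent.mk ⟨p, hp⟩, (ccx_eq_zero p hp).mpr hd⟩

theorem exists_H1mk (m : H1Cotangent A C) : ∃ p hp hd, m = H1mk p hp hd := by
  obtain ⟨m, hm⟩ := m
  obtain ⟨⟨p, hp⟩, rfl⟩ := Extension.Cotangent.mk_surjective m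
  exact ⟨p, hp, (ccx_eq_zero p hp).mp hm, rfl⟩

theorem H1mk_eq_zero (p : MvPolynomial C A) (hp hd) : H1mk p hp hd = 0 ↔
    p ∈ (RingHom.ker (aeval (R := A) (id : C → C))) ^ 2 := by
  have := Extension.Cotangent.mk_eq_zero_iff
    (⟨p, hp⟩ : (Generators.self A C).toExtension.ker)
  refine Iff.trans ?_ this
  exact Subtype.ext_iff

theorem aeval_rename_id (f : B →ₐ[A] C) (p : MvPolynomial B A) :
    aeval (id : C → C) (rename f p) = f (aeval (id : B → B) p) := by
  rw [aeval_rename, ← AlgHom.comp_apply, comp_aeval]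
  rfl

theorem hm_H1mk (f : B →ₐ[A] C) (p : MvPolynomial B A) (hp hd) :
    ∃ hp' hd', hm f (H1mk p hp hd) = H1mk (rename f p) hp' hd' := by
  let := f.toRingHom.toAlgebra
  have : IsScalarTower A B C := .of_algebraMap_eq' f.comp_algebraMap.symm
  let F : MvPolynomial B A →ₐ[A] MvPolynomial C A :=
    (Generators.defaultHom (Generators.self A B) (Generators.self A C)).toAlgHom
  have hF : F = rename f := by
    refine MvPolynomial.algHom_ext fun i => ?_
    rw [rename_X]
    exact aeval_X _ _
  have h0 : ∃ q, q = rename f p ∧ ∃ hp' hd', hm f (H1mk p hp hd) = H1mk q hp' hd' := by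
    refine ⟨F p, by rw [hF], ?_, ?_, rfl⟩
    · rw [hF, aeval_rename_id, hp, map_zero]
    · exact (ccx_eq_zero _ _).mp (hm f (H1mk p hp hd)).2
  obtain ⟨q, rfl, h⟩ := h0
  exact h

end

section union
variable {A Ω ι : Type*} [CommRing A] [CommRing Ω] [Algebra A Ω] [Nonempty ι]
  (D : ι → Subalgebra A Ω) (hD : Directed (· ≤ ·) D) (C : Subalgebra A Ω)
  (hDC : ∀ i, D i ≤ C) (hcov : ∀ x ∈ C, ∃ i, x ∈ D i)

theorem rename_incl_comp {B C D : Subalgebra A Ω} (h : B ≤ C) (h' : C ≤ D) (p : MvPolynomial B A) :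
    rename (Subalgebra.inclusion h') (rename (Subalgebra.inclusion h) p) =
      rename (Subalgebra.inclusion (h.trans h')) p := by
  rw [rename_rename]; rfl

include hD hcov in
theorem cov_poly (q : MvPolynomial C A) :
    ∃ i, ∃ q' : MvPolynomial (D i) A, rename (Subalgebra.inclusion (hDC i)) q' = q := by
  induction q using MvPolynomial.induction_on with
  | C a => exact ⟨Classical.arbitrary ι, MvPolynomial.C a, by simp⟩
  | add p q hp hq =>
    obtain ⟨i, p, rfl⟩ := hp
    obtain ⟨j, q, rfl⟩ := hq
    obtain ⟨k, hi, hj⟩ := hD i j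
    refine ⟨k, rename (Subalgebra.inclusion hi) p + rename (Subalgebra.inclusion hj) q, ?_⟩
    rw [map_add, rename_incl_comp, rename_incl_comp]
  | mul_X p n hp =>
    obtain ⟨i, p, rfl⟩ := hp
    obtain ⟨j, hx⟩ := hcov n n.2
    obtain ⟨k, hi, hj⟩ := hD i j
    refine ⟨k, rename (Subalgebra.inclusion hi) p * X ⟨n, hj hx⟩, ?_⟩
    rw [map_mul, rename_incl_comp, rename_X]
    rfl

theorem ker_rename {B C : Subalgebra A Ω} (h : B ≤ C) (p : MvPolynomial B A) :
    rename (Subalgebra.inclusion h) p ∈ RingHom.ker (aeval (R := A) (id : C → C)) ↔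
      p ∈ RingHom.ker (aeval (R := A) (id : B → B)) := by
  rw [RingHom.mem_ker, RingHom.mem_ker, aeval_rename_id,
    map_eq_zero_iff _ (Subalgebra.inclusion_injective h)]

theorem ker_rename_sq {B C : Subalgebra A Ω} (h : B ≤ C) (p : MvPolynomial B A)
    (hp : p ∈ RingHom.ker (aeval (R := A) (id : B → B)) ^ 2) :
    rename (Subalgebra.inclusion h) p ∈ RingHom.ker (aeval (R := A) (id : C → C)) ^ 2 := by
  have := Ideal.mem_map_of_mem (rename (R := A) (Subalgebra.inclusion h)) hp
  rw [Ideal.map_pow] at this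
  refine Ideal.pow_right_mono ?_ 2 this
  rw [Ideal.map_le_iff_le_comap]
  intro x hx
  exact (ker_rename h x).mpr hx

include hD hcov in
theorem cov_ker_sq (q : MvPolynomial C A)
    (hq : q ∈ (RingHom.ker (aeval (R := A) (id : C → C))) ^ 2) :
    ∃ i, ∃ q' ∈ (RingHom.ker (aeval (R := A) (id : D i → D i))) ^ 2,
      rename (Subalgebra.inclusion (hDC i)) q' = q := by
  rw [pow_two] at hq
  refine Submodule.mul_induction_on hq ?_ ?_
  · intro p hp q hq
    obtain ⟨i, p, rfl⟩ := cov_poly D hD C hDC hcov p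
    obtain ⟨j, q, rfl⟩ := cov_poly D hD C hDC hcov q
    rw [ker_rename] at hp hq
    obtain ⟨k, hi, hj⟩ := hD i j
    refine ⟨k, rename (Subalgebra.inclusion hi) p * rename (Subalgebra.inclusion hj) q, ?_, ?_⟩
    · rw [pow_two]
      exact Ideal.mul_mem_mul ((ker_rename _ _).mpr hp) ((ker_rename _ _).mpr hq)
    · rw [map_mul, rename_incl_comp, rename_incl_comp]
  · rintro _ _ ⟨i, p, hp, rfl⟩ ⟨j, q, hq, rfl⟩
    obtain ⟨k, hi, hj⟩ := hD i j
    refine ⟨k, rename (Subalgebra.inclusion hi) p + rename (Subalgebra.inclusion hj) q, ?_, ?_⟩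
    · exact add_mem (ker_rename_sq _ _ hp) (ker_rename_sq _ _ hq)
    · rw [map_add, rename_incl_comp, rename_incl_comp]

/-- map induced by an inclusion of subalgebras -/
noncomputable abbrev hi {B C : Subalgebra A Ω} (h : B ≤ C) : H1Cotangent A B →+ H1Cotangent A C :=
  hm (Subalgebra.inclusion h)

theorem hi_hi {B C D : Subalgebra A Ω} (h : B ≤ C) (h' : C ≤ D) (m : H1Cotangent A B) :
    hi h' (hi h m) = hi (h.trans h') m := by
  rw [hi, hi, ← hm_comp]; rfl

include hD hcov in
theorem union_surj (m : H1Cotangent A C) : ∃ i, ∃ m', hi (hDC i) m' = m := by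
  obtain ⟨p, hp, hd, rfl⟩ := exists_H1mk m
  obtain ⟨i, p, rfl⟩ := cov_poly D hD C hDC hcov p
  refine ⟨i, H1mk p ((ker_rename _ _).mp hp) ?_, ?_⟩
  · intro c
    have := hd (Subalgebra.inclusion (hDC i) c)
    rw [pderiv_rename (Subalgebra.inclusion_injective (hDC i))] at this
    exact (ker_rename _ _).mp this
  · obtain ⟨_, _, h⟩ := hm_H1mk (Subalgebra.inclusion (hDC i)) p ((ker_rename _ _).mp hp) (fun c => by
      have := hd (Subalgebra.inclusion (hDC i) c)
      rw [pderiv_rename (Subalgebra.inclusion_injective (hDC i))] at this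
      exact (ker_rename _ _).mp this)
    exact h

include hD hcov in
theorem union_inj (i : ι) (m : H1Cotangent A (D i)) (h : hi (hDC i) m = 0) :
    ∃ j, ∃ hij : D i ≤ D j, hi hij m = 0 := by
  obtain ⟨p, hp, hd, rfl⟩ := exists_H1mk m
  have h' : ∀ {B C : Subalgebra A Ω} (h : B ≤ C) (p : MvPolynomial B A) (hp hd),
    hi h (H1mk p hp hd) = 0 ↔ rename (Subalgebra.inclusion h) p ∈
      RingHom.ker (aeval (R := A) (id : C → C)) ^ 2 := by
    intro B C h p hp hd
    obtain ⟨_, _, h1⟩ := hm_H1mk (Subalgebra.inclusion h) p hp hd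
    rw [hi, h1, H1mk_eq_zero]
  rw [h'] at h
  obtain ⟨j, q, hq, hqe⟩ := cov_ker_sq D hD C hDC hcov _ h
  obtain ⟨k, hik, hjk⟩ := hD i j
  refine ⟨k, hik, ?_⟩
  rw [h']
  have : rename (Subalgebra.inclusion hik) p = rename (Subalgebra.inclusion hjk) q := by
    apply rename_injective _ (Subalgebra.inclusion_injective (hDC k))
    rw [rename_incl_comp, rename_incl_comp, hqe]
  rw [this]
  exact ker_rename_sq _ _ hq

end union
end H1T

namespace H1T
open MvPolynomial Algebra
variable {A Ω : Type*} [CommRing A] [Field Ω] [Algebra A Ω]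

/-- `H1(C/A)` is torsion-free -/
def TF (C : Subalgebra A Ω) : Prop := Module.IsTorsionFree C (H1Cotangent A C)

/-- `D` has a presentation over `B` with principal kernel -/
def PP (B D : Subalgebra A Ω) : Prop := ∃ (κ : Type) (y : κ → Ω) (f : MvPolynomial κ B),
  (∀ x, x ∈ D ↔ ∃ p : MvPolynomial κ B, aeval y p = x) ∧
    RingHom.ker (aeval y : MvPolynomial κ B →ₐ[B] Ω) = Ideal.span {f}

theorem PP.exists_gen {B D : Subalgebra A Ω} (h : PP B D) (hBD : B ≤ D) [Algebra B D]
    (halg : ∀ b, algebraMap B D b = Subalgebra.inclusion hBD b) :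
    ∃ (κ : Type) (Q : Generators B D κ) (f : Q.Ring), Q.ker = Ideal.span {f} := by
  obtain ⟨κ, y, f, h1, h2⟩ := h
  have : IsScalarTower B D Ω := .of_algebraMap_eq fun b => by rw [halg]; rfl
  have hy : ∀ k, y k ∈ D := fun k => (h1 _).mpr ⟨X k, aeval_X _ _⟩
  let y' : κ → D := fun k => ⟨y k, hy k⟩
  have hay : ∀ p : MvPolynomial κ B, ((aeval y' p : D) : Ω) = aeval y p := by
    intro p
    have : (IsScalarTower.toAlgHom B D Ω).comp (aeval y') = aeval y := by
      refine MvPolynomial.algHom_ext fun i => ?_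
      simp [y']
    rw [← this]
    rfl
  have hs : Function.Surjective (aeval (R := B) y') := by
    intro x
    obtain ⟨p, hp⟩ := (h1 x).mp x.2
    exact ⟨p, Subtype.ext (by rw [hay, hp])⟩
  refine ⟨κ, Generators.ofSurjective y' hs, f, ?_⟩
  rw [Generators.ker_eq_ker_aeval_val, ← h2]
  ext p
  rw [RingHom.mem_ker, RingHom.mem_ker, ← hay]
  exact Subtype.ext_iff

theorem T_PP {B D : Subalgebra A Ω} (h : PP B D) (hBD : B ≤ D) [IsBezout B] (hT : TF B) : TF D := by
  let := (Subalgebra.inclusion hBD).toRingHom.toAlgebra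
  have : IsScalarTower A B D := .of_algebraMap_eq' (Subalgebra.inclusion hBD).comp_algebraMap.symm
  obtain ⟨κ, Q, f, hf⟩ := h.exists_gen hBD (fun _ => rfl)
  exact Generators.T_step Q f hf hT

theorem J_PP {B D C : Subalgebra A Ω} (h : PP B D) (hBD : B ≤ D) (hDC : D ≤ C) [IsBezout B]
    [IsLocalRing B] [IsLocalRing C] (hloc : ∀ b ∈ B, b⁻¹ ∈ C → b⁻¹ ∈ B) (s : D) (hs : (s : Ω)⁻¹ ∈ C)
    (hs0 : s ≠ 0) (m : H1Cotangent A B) (hm : s • hi hBD m = 0) : m = 0 := by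
  let := (Subalgebra.inclusion hBD).toRingHom.toAlgebra
  have : IsScalarTower A B D := .of_algebraMap_eq' (Subalgebra.inclusion hBD).comp_algebraMap.symm
  let := (Subalgebra.inclusion hDC).toRingHom.toAlgebra
  let := (Subalgebra.inclusion (hBD.trans hDC)).toRingHom.toAlgebra
  have : IsScalarTower B D C := .of_algebraMap_eq' rfl
  obtain ⟨κ, Q, f, hf⟩ := h.exists_gen hBD (fun _ => rfl)
  refine Generators.J_step Q f hf (V := C) (Subalgebra.inclusion_injective (hBD.trans hDC)) ⟨?_⟩
    s ?_ m hm
  · intro b hb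
    have hb0 : (b : Ω) ≠ 0 := by
      intro h0
      have : algebraMap B C b = 0 := Subtype.ext h0
      rw [this] at hb
      exact not_isUnit_zero hb
    have : (b : Ω)⁻¹ ∈ C := by
      obtain ⟨c, hc⟩ := hb.exists_right_inv
      have hc : (b : Ω) * c = 1 := congrArg Subtype.val hc
      rw [← eq_inv_of_mul_eq_one_right hc]
      exact c.2
    exact IsUnit.of_mul_eq_one ⟨_, hloc b b.2 this⟩ (Subtype.ext (mul_inv_cancel₀ hb0))
  · have hs0' : (s : Ω) ≠ 0 := fun h => hs0 (Subtype.ext h)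
    exact IsUnit.of_mul_eq_one ⟨_, hs⟩ (Subtype.ext (mul_inv_cancel₀ hs0'))

section union
variable {ι : Type*} [Nonempty ι]
  (D : ι → Subalgebra A Ω) (hD : Directed (· ≤ ·) D) (C : Subalgebra A Ω)
  (hDC : ∀ i, D i ≤ C) (hcov : ∀ x ∈ C, ∃ i, x ∈ D i)

include hD hDC hcov in
theorem TF_union (hT : ∀ i, TF (D i)) : TF C := by
  rw [TF, Module.isTorsionFree_iff_smul_eq_zero]
  intro r m hr
  obtain ⟨i, m, rfl⟩ := union_surj D hD C hDC hcov m
  obtain ⟨j, hj⟩ := hcov r r.2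
  obtain ⟨k, hik, hjk⟩ := hD i j
  have e : hi (hDC k) ((⟨r, hjk hj⟩ : D k) • hi hik m) = 0 := by
    rw [hi, hm_smul, ← hi, hi_hi, ← hr]
    rfl
  obtain ⟨l, hkl, h⟩ := union_inj D hD C hDC hcov k _ e
  rw [hi, hm_smul] at h
  have := hT l
  rw [TF, Module.isTorsionFree_iff_smul_eq_zero] at this
  rcases this _ _ h with h | h
  · left
    have h' : ((Subalgebra.inclusion hkl ⟨r, hjk hj⟩ : D l) : Ω) = ((0 : D l) : Ω) := congrArg _ h
    exact Subtype.ext h'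
  · right
    rw [hi_hi] at h
    have := congrArg (hi (hDC l)) h
    rwa [hi_hi, map_zero] at this

include hD hDC hcov in
/-- the step lemma -/
theorem loc_step {B : Subalgebra A Ω} {E : Subalgebra A Ω} (hCE : C ≤ E)
    (hloc : ∀ b ∈ B, b⁻¹ ∈ E → b⁻¹ ∈ B) [IsBezout B] [IsLocalRing B] [IsLocalRing E]
    (hBD : ∀ i, B ≤ D i) (hPP : ∀ i, PP B (D i))
    (hfrac : ∀ z ∈ E, ∃ s ∈ C, s ≠ 0 ∧ s⁻¹ ∈ E ∧ z * s ∈ C) (hBE : B ≤ E) :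
    (TF B → TF E) ∧ Function.Injective (hi hBE) := by
  let := (Subalgebra.inclusion hCE).toRingHom.toAlgebra
  have : IsScalarTower A C E := .of_algebraMap_eq' (Subalgebra.inclusion hCE).comp_algebraMap.symm
  let M : Submonoid C :=
    { carrier := {s | s ≠ 0 ∧ (s : Ω)⁻¹ ∈ E}
      one_mem' := ⟨one_ne_zero, by simp⟩
      mul_mem' := fun {a b} ha hb => ⟨mul_ne_zero ha.1 hb.1, by
        have : ((a * b : C) : Ω)⁻¹ = (a : Ω)⁻¹ * (b : Ω)⁻¹ := by
          rw [MulMemClass.coe_mul, mul_inv]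
        rw [this]
        exact mul_mem ha.2 hb.2⟩ }
  have hlocal : IsLocalization M E := by
    refine ⟨?_, ?_, ?_⟩
    · rintro ⟨s, hs0, hs⟩
      have hs0' : (s : Ω) ≠ 0 := fun h => hs0 (Subtype.ext h)
      exact IsUnit.of_mul_eq_one ⟨_, hs⟩ (Subtype.ext (mul_inv_cancel₀ hs0'))
    · intro z
      obtain ⟨s, hs, h0, h1, h2⟩ := hfrac z z.2
      exact ⟨⟨⟨_, h2⟩, ⟨⟨s, hs⟩, fun h => h0 (congrArg Subtype.val h), h1⟩⟩, rfl⟩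
    · intro x y h
      exact ⟨1, by rw [Subalgebra.inclusion_injective hCE h]⟩
  have hmod : IsLocalizedModule M (H1Cotangent.map A A C E) := inferInstance
  have hmap : ∀ m, H1Cotangent.map A A C E m = hi hCE m := fun m => (hm_eq _ (fun _ => rfl) m).symm
  have hBC : B ≤ C := (hBD (Classical.arbitrary ι)).trans (hDC _)
  constructor
  · intro hT
    have hTC : TF C := TF_union D hD C hDC hcov fun i => T_PP (hPP i) (hBD i) hT
    rw [TF, Module.isTorsionFree_iff_smul_eq_zero] at hTC ⊢
    intro r m hr
    obtain ⟨⟨m', s⟩, hs⟩ := IsLocalizedModule.surj M (H1Cotangent.map A A C E) m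
    obtain ⟨⟨d, t⟩, ht⟩ := IsLocalization.surj M r
    dsimp only at hs ht
    have hs : (s : C) • m = H1Cotangent.map A A C E m' := hs
    have e : H1Cotangent.map A A C E (d • m') = 0 := by
      rw [map_smul, ← hs, smul_comm, ← algebraMap_smul E d m, ← ht, mul_smul, smul_comm r, hr,
        smul_zero, smul_zero]
    obtain ⟨c, hc⟩ := (IsLocalizedModule.eq_zero_iff M (H1Cotangent.map A A C E)).mp e
    have hc : (c : C) • d • m' = 0 := hc
    rcases hTC _ _ hc with h | h
    · exact absurd h c.2.1
    rcases hTC _ _ h with h | h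
    · left
      rw [h, map_zero] at ht
      exact (IsLocalization.map_units E t).mul_left_eq_zero.mp ht
    · right
      rw [h, map_zero, ← algebraMap_smul E] at hs
      exact (IsLocalization.map_units E s).smul_eq_zero.mp hs
  · rw [injective_iff_map_eq_zero]
    intro m h0
    rw [← hi_hi hBC hCE, ← hmap] at h0
    obtain ⟨c, hc⟩ := (IsLocalizedModule.eq_zero_iff M (H1Cotangent.map A A C E)).mp h0
    have hc : (c : C) • hi hBC m = 0 := hc
    obtain ⟨i, hi'⟩ := hcov (c : C) (c : C).2
    have e : hi (hDC i) ((⟨_, hi'⟩ : D i) • hi (hBD i) m) = 0 := by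
      rw [hi, hm_smul, ← hi, hi_hi, ← hc]
      rfl
    obtain ⟨j, hij, h⟩ := union_inj D hD C hDC hcov i _ e
    rw [hi, hm_smul, ← hi, hi_hi] at h
    refine J_PP (hPP j) (hBD j) ((hDC j).trans hCE) hloc _ ?_ ?_ m h
    · exact c.2.2
    · intro h
      have h' : ((Subalgebra.inclusion hij ⟨_, hi'⟩ : D j) : Ω) = ((0 : D j) : Ω) := congrArg _ h
      exact c.2.1 (Subtype.ext h')
end union
end H1T

namespace H1T

section Monogenic
open Polynomial

theorem ker_principal_poly {B Ω : Type*} [CommRing B] [IsDomain B] [IsBezout B] [Field Ω]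
    [Algebra B Ω] [FaithfulSMul B Ω] (y : Ω) :
    ∃ p : B[X], ∀ g : B[X], aeval y g = 0 ↔ p ∣ g := by
  by_cases halg : IsAlgebraic B y
  swap
  · refine ⟨0, fun g => ?_⟩
    rw [zero_dvd_iff]
    refine ⟨fun h => ?_, fun h => by simp [h]⟩
    by_contra h0
    exact halg ⟨g, h0, h⟩
  let := FractionRing.liftAlgebra B Ω
  have := FractionRing.isScalarTower_liftAlgebra B Ω
  let k := FractionRing B
  obtain ⟨inst⟩ : Nonempty (NormalizedGCDMonoid B) := inferInstance
  have halg' : IsAlgebraic k y := (IsFractionRing.isAlgebraic_iff B k Ω).mp halg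
  let P := IsLocalization.integerNormalization (nonZeroDivisors B) (minpoly k y)
  obtain ⟨b, hb, hP⟩ := IsLocalization.integerNormalization_spec (nonZeroDivisors B) (minpoly k y)
  have hb0 : algebraMap B k b ≠ 0 := by
    simpa using nonZeroDivisors.ne_zero hb
  have hP0 : P ≠ 0 := by
    intro h
    exact minpoly.ne_zero halg'.isIntegral (IsFractionRing.integerNormalization_eq_zero_iff.mp h)
  have hc0 : algebraMap B k P.content ≠ 0 := by
    simpa [content_eq_zero_iff] using hP0
  have hP2 : C (algebraMap B k P.content) * P.primPart.map (algebraMap B k) =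
      C (algebraMap B k b) * minpoly k y := by
    rw [← map_C, ← Polynomial.map_mul, ← eq_C_content_mul_primPart, hP, ← algebraMap_smul k b,
      smul_eq_C_mul]
  have hu : ∀ c : k, c ≠ 0 → IsUnit (C c) := fun c hc => isUnit_C.mpr (isUnit_iff_ne_zero.mpr hc)
  refine ⟨P.primPart, fun g => ?_⟩
  have h1 : P.primPart ∣ g ↔ minpoly k y ∣ g.map (algebraMap B k) := by
    have h2 : Associated (P.primPart.map (algebraMap B k)) (minpoly k y) := by
      have e1 := associated_unit_mul_left (P.primPart.map (algebraMap B k)) _ (hu _ hc0)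
      have e2 := associated_unit_mul_left (minpoly k y) _ (hu _ hb0)
      rw [hP2] at e1
      exact e1.symm.trans e2
    rw [← h2.dvd_iff_dvd_left]
    exact ⟨fun h => Polynomial.map_dvd _ h, fun h =>
      (isPrimitive_primPart P).dvd_of_fraction_map_dvd_fraction_map h⟩
  rw [h1, minpoly.dvd_iff, aeval_map_algebraMap]

end Monogenic

open MvPolynomial

theorem ker_principal_one {B Ω : Type*} [CommRing B] [IsDomain B] [IsBezout B] [Field Ω]
    [Algebra B Ω] [FaithfulSMul B Ω] (y : Ω) :
    ∃ f : MvPolynomial Unit B,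
      RingHom.ker (aeval (fun _ => y) : MvPolynomial Unit B →ₐ[B] Ω) = Ideal.span {f} := by
  obtain ⟨p, hp⟩ := ker_principal_poly (B := B) y
  let e := MvPolynomial.uniqueAlgEquiv B Unit
  have he : ∀ q, aeval (fun _ => y) q = Polynomial.aeval y (e q) := by
    intro q
    have : (aeval (fun _ => y) : MvPolynomial Unit B →ₐ[B] Ω) =
      (Polynomial.aeval y).comp e.toAlgHom := by
      refine MvPolynomial.algHom_ext fun i => ?_
      change _ = Polynomial.aeval y (eval₂ Polynomial.C (fun _ => Polynomial.X) (X i))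
      simp
    rw [this]
    rfl
  refine ⟨e.symm p, ?_⟩
  ext q
  rw [RingHom.mem_ker, he, hp, Ideal.mem_span_singleton]
  constructor
  · intro h
    simpa using map_dvd e.symm h
  · intro h
    simpa using map_dvd e h

/-- normal form modulo `UW - d` -/
theorem UW_normal {B : Type*} [CommRing B] (d : B) (q : MvPolynomial Bool B) :
    ∃ P Q : Polynomial B, (X true * X false - C d) ∣
      q - (Polynomial.aeval (X true) P + X false * Polynomial.aeval (X false) Q) := by
  induction q using MvPolynomial.induction_on with
  | C a => exact ⟨Polynomial.C a, 0, by simp [MvPolynomial.algebraMap_eq]⟩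
  | add p q hp hq =>
    obtain ⟨P, Q, h⟩ := hp
    obtain ⟨P', Q', h'⟩ := hq
    refine ⟨P + P', Q + Q', ?_⟩
    convert dvd_add h h' using 1
    simp only [map_add]
    ring
  | mul_X p i hp =>
    obtain ⟨P, Q, h⟩ := hp
    cases i
    · refine ⟨Polynomial.C d * P.divX, Polynomial.C (P.coeff 0) + Polynomial.X * Q, ?_⟩
      have hP := congrArg (Polynomial.aeval (X true : MvPolynomial Bool B)) P.divX_mul_X_add
      simp only [map_add, map_mul, Polynomial.aeval_X, Polynomial.aeval_C,
        MvPolynomial.algebraMap_eq] at hP ⊢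
      have : p * X false - (C d * Polynomial.aeval (X true) P.divX + X false *
          (C (P.coeff 0) + X false * Polynomial.aeval (X false) Q)) =
          (p - (Polynomial.aeval (X true) P + X false * Polynomial.aeval (X false) Q)) * X false +
          (X true * X false - C d) * Polynomial.aeval (X true) P.divX := by
        rw [← hP]; ring
      rw [this]
      exact dvd_add (h.mul_right _) (dvd_mul_right _ _)
    · refine ⟨Polynomial.X * P + Polynomial.C (d * Q.coeff 0), Polynomial.C d * Q.divX, ?_⟩
      have hP := congrArg (Polynomial.aeval (X false : MvPolynomial Bool B)) Q.divX_mul_X_add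
      simp only [map_add, map_mul, Polynomial.aeval_X, Polynomial.aeval_C,
        MvPolynomial.algebraMap_eq] at hP ⊢
      have : p * X true - (X true * Polynomial.aeval (X true) P + C d * C (Q.coeff 0) + X false *
          (C d * Polynomial.aeval (X false) Q.divX)) =
          (p - (Polynomial.aeval (X true) P + X false * Polynomial.aeval (X false) Q)) * X true +
          (X true * X false - C d) * Polynomial.aeval (X false) Q := by
        rw [← hP]; ring
      rw [this]
      exact dvd_add (h.mul_right _) (dvd_mul_right _ _)

/-- if `P(u) + w Q(w) = 0` with `u` transcendental, `u w = d ≠ 0`, then `P = Q = 0`. -/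
theorem UW_zero {B Ω : Type*} [CommRing B] [IsDomain B] [Field Ω]
    [Algebra B Ω] [FaithfulSMul B Ω] (u w : Ω) (d : B) (hd : d ≠ 0) (huw : u * w = algebraMap B Ω d)
    (hu : Transcendental B u) (P Q : Polynomial B)
    (h : Polynomial.aeval u P + w * Polynomial.aeval w Q = 0) : P = 0 ∧ Q = 0 := by
  have key : ∀ n : ℕ, ∀ P Q : Polynomial B, Q.degree < n →
      Polynomial.aeval u P + w * Polynomial.aeval w Q = 0 → P = 0 ∧ Q = 0 := by
    intro n
    induction n with
    | zero =>
      intro P Q hQ h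
      have hQ0 : Q = 0 := by
        rw [← Polynomial.degree_eq_bot]
        simpa using hQ
      subst hQ0
      simp only [map_zero, mul_zero, add_zero] at h
      refine ⟨?_, rfl⟩
      by_contra hP
      exact hu ⟨P, hP, h⟩
    | succ n ih =>
      intro P Q hQ h
      by_cases hQ0 : Q = 0
      · exact ih P Q (by rw [hQ0, Polynomial.degree_zero]; exact WithBot.bot_lt_coe n) h
      have hlt := Polynomial.degree_divX_lt hQ0
      have hlt2 : (Polynomial.C d * Q.divX).degree < n := by
        rw [Polynomial.degree_C_mul hd]
        have : Q.natDegree < n + 1 := by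
          rw [Polynomial.natDegree_lt_iff_degree_lt hQ0]; exact hQ
        refine lt_of_lt_of_le hlt ?_
        rw [← Polynomial.natDegree_le_iff_degree_le]
        omega
      have hw := congrArg (Polynomial.aeval w) Q.divX_mul_X_add
      simp only [map_add, map_mul, Polynomial.aeval_X, Polynomial.aeval_C] at hw
      have := ih (Polynomial.X * P + Polynomial.C (d * Q.coeff 0)) (Polynomial.C d * Q.divX) hlt2 (by
        simp only [map_add, map_mul, Polynomial.aeval_X, Polynomial.aeval_C, ← huw]
        rw [← hw] at h
        linear_combination u * h)
      obtain ⟨h1, h2⟩ := this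
      have hd' : Q.divX = 0 := by
        rcases mul_eq_zero.mp h2 with h2 | h2
        · exact absurd (Polynomial.C_eq_zero.mp h2) hd
        · exact h2
      have hq0 : Q.coeff 0 = 0 := by
        have := congrArg (fun p => Polynomial.coeff p 0) h1
        simpa [hd] using this
      have hQz : Q = 0 := by
        rw [← Q.divX_mul_X_add, hd', hq0]; simp
      exact absurd hQz hQ0
  exact key (Q.natDegree + 1) P Q (lt_of_le_of_lt Polynomial.degree_le_natDegree
    (by exact_mod_cast Nat.lt_succ_self _)) h

theorem ker_UW {B Ω : Type*} [CommRing B] [IsDomain B] [Field Ω]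
    [Algebra B Ω] [FaithfulSMul B Ω] (u w : Ω) (d : B) (hd : d ≠ 0) (huw : u * w = algebraMap B Ω d)
    (hu : Transcendental B u) :
    RingHom.ker (aeval (fun b : Bool => if b then u else w) : MvPolynomial Bool B →ₐ[B] Ω) =
      Ideal.span {X true * X false - C d} := by
  have hz : aeval (fun b : Bool => if b then u else w) (X true * X false - C d) = 0 := by
    simp [huw]
  ext q
  rw [RingHom.mem_ker, Ideal.mem_span_singleton]
  constructor
  · intro h
    obtain ⟨P, Q, hPQ⟩ := UW_normal d q
    have h2 : Polynomial.aeval u P + w * Polynomial.aeval w Q = 0 := by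
      obtain ⟨t, ht⟩ := hPQ
      have := congrArg (aeval (fun b : Bool => if b then u else w)) ht
      rw [map_mul, hz, zero_mul, map_sub, h, zero_sub, neg_eq_zero, map_add, map_mul,
        ← Polynomial.aeval_algHom_apply, ← Polynomial.aeval_algHom_apply] at this
      simpa using this
    obtain ⟨rfl, rfl⟩ := UW_zero u w d hd huw hu P Q h2
    simpa using hPQ
  · rintro ⟨t, rfl⟩
    rw [map_mul, hz, zero_mul]

variable {A Ω : Type*} [CommRing A] [Field Ω] [Algebra A Ω]

/-- adjoining a family -/
noncomputable def adj (B : Subalgebra A Ω) {κ : Type} (y : κ → Ω) : Subalgebra A Ω :=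
  ((aeval y : MvPolynomial κ B →ₐ[B] Ω).range).restrictScalars A

theorem mem_adj {B : Subalgebra A Ω} {κ : Type} {y : κ → Ω} {x : Ω} :
    x ∈ adj B y ↔ ∃ p : MvPolynomial κ B, aeval y p = x := Iff.rfl

theorem le_adj (B : Subalgebra A Ω) {κ : Type} (y : κ → Ω) : B ≤ adj B y := by
  intro b hb
  exact ⟨MvPolynomial.C ⟨b, hb⟩, by simp⟩

theorem self_mem_adj (B : Subalgebra A Ω) {κ : Type} (y : κ → Ω) (k : κ) : y k ∈ adj B y :=
  ⟨X k, by simp⟩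

theorem adj_le {B C : Subalgebra A Ω} {κ : Type} {y : κ → Ω} (h : B ≤ C) (hy : ∀ k, y k ∈ C) :
    adj B y ≤ C := by
  rintro _ ⟨p, rfl⟩
  induction p using MvPolynomial.induction_on with
  | C a =>
    have : (aeval y : MvPolynomial κ B →ₐ[B] Ω) (MvPolynomial.C a) = (a : Ω) := by simp
    exact this ▸ h a.2
  | add p q hp hq => rw [map_add]; exact C.add_mem hp hq
  | mul_X p i hp => rw [map_mul]; exact C.mul_mem hp (by simpa using hy i)

theorem PP_one (B : Subalgebra A Ω) [IsBezout B] (y : Ω) : PP B (adj B fun _ : Unit => y) := by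
  obtain ⟨f, hf⟩ := ker_principal_one (B := B) y
  exact ⟨Unit, fun _ => y, f, fun _ => mem_adj, hf⟩

theorem PP_UW (B : Subalgebra A Ω) (u w : Ω) (hd : u * w ∈ B) (hd0 : u * w ≠ 0)
    (hu : Transcendental B u) : PP B (adj B fun b : Bool => if b then u else w) :=
  ⟨Bool, _, _, fun _ => mem_adj, ker_UW u w ⟨u * w, hd⟩ (fun h => hd0 (congrArg Subtype.val h)) rfl hu⟩

end H1T

namespace H1T

section Field
open Polynomial

variable {A K Ω : Type*} [CommRing A] [Field K] [Field Ω] [Algebra K Ω] [Algebra A K] [Algebra A Ω]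
  [IsScalarTower A K Ω]

/-- integers of an intermediate field -/
def OO (V : ValuationSubring Ω) (hA : ∀ a : A, algebraMap A Ω a ∈ V) (F : IntermediateField K Ω) :
    Subalgebra A Ω where
  carrier := {x | x ∈ F ∧ x ∈ V}
  mul_mem' := fun ha hb => ⟨F.mul_mem ha.1 hb.1, V.mul_mem _ _ ha.2 hb.2⟩
  add_mem' := fun ha hb => ⟨F.add_mem ha.1 hb.1, V.add_mem _ _ ha.2 hb.2⟩
  algebraMap_mem' := fun a => ⟨by
    rw [IsScalarTower.algebraMap_apply A K Ω]; exact F.algebraMap_mem _, hA a⟩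

variable {V : ValuationSubring Ω} {hA : ∀ a : A, algebraMap A Ω a ∈ V}

theorem mem_OO {F : IntermediateField K Ω} {x : Ω} : x ∈ OO V hA F ↔ x ∈ F ∧ x ∈ V := Iff.rfl

theorem mem_OO' {F : IntermediateField K Ω} {x : Ω} :
    x ∈ OO V hA F ↔ x ∈ F ∧ V.valuation x ≤ 1 := by rw [mem_OO, V.valuation_le_one_iff]

theorem OO_mono {F F' : IntermediateField K Ω} (h : F ≤ F') : OO V hA F ≤ OO V hA F' :=
  fun _ hx => ⟨h hx.1, hx.2⟩

instance OO_val (F : IntermediateField K Ω) : ValuationRing (OO V hA F) where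
  cond' := by
    rintro ⟨a, ha, ha'⟩ ⟨b, hb, hb'⟩
    by_cases ha0 : a = 0
    · exact ⟨0, Or.inr (Subtype.ext (by simp [ha0]))⟩
    by_cases hb0 : b = 0
    · exact ⟨0, Or.inl (Subtype.ext (by simp [hb0]))⟩
    rcases V.mem_or_inv_mem (b / a) with h | h
    · exact ⟨⟨b / a, F.div_mem hb ha, h⟩, Or.inl (Subtype.ext (by
        change a * (b / a) = b
        field_simp))⟩
    · rw [inv_div] at h
      exact ⟨⟨a / b, F.div_mem ha hb, h⟩, Or.inr (Subtype.ext (by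
        change b * (a / b) = a
        field_simp))⟩

/-- what one step provides -/
def Good (V : ValuationSubring Ω) (hA : ∀ a : A, algebraMap A Ω a ∈ V)
    (F F' : IntermediateField K Ω) : Prop :=
  (TF (OO V hA F) → TF (OO V hA F')) ∧
    ∀ h : OO V hA F ≤ OO V hA F', Function.Injective (hi h)

theorem Good_of_family {F F' : IntermediateField K Ω} (hF : F ≤ F') {ι : Type*} [Nonempty ι]
    (D : ι → Subalgebra A Ω) (hD : Directed (· ≤ ·) D) (hDE : ∀ i, D i ≤ OO V hA F')
    (hBD : ∀ i, OO V hA F ≤ D i) (hPP : ∀ i, PP (OO V hA F) (D i))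
    (hfrac : ∀ z ∈ OO V hA F', ∃ s ∈ ⨆ i, D i, V.valuation s = 1 ∧ z * s ∈ ⨆ i, D i) :
    Good V hA F F' := by
  have hCE : ⨆ i, D i ≤ OO V hA F' := iSup_le hDE
  have key := fun h => loc_step D hD (⨆ i, D i) (fun i => le_iSup D i) (fun x hx => by
    have : x ∈ ((⨆ i, D i : Subalgebra A Ω) : Set Ω) := hx
    rw [Subalgebra.coe_iSup_of_directed hD] at this
    simpa using this) (B := OO V hA F) (E := OO V hA F') hCE
    (fun b hb hb' => ⟨F.inv_mem hb.1, hb'.2⟩) hBD hPP (by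
    intro z hz
    obtain ⟨s, hs, h1, h2⟩ := hfrac z hz
    refine ⟨s, hs, ?_, ?_, h2⟩
    · rintro rfl
      simp at h1
    · rw [mem_OO']
      exact ⟨F'.inv_mem (hCE hs).1, by rw [map_inv₀, h1, inv_one]⟩) h
  exact ⟨(key (OO_mono hF)).1, fun h => (key h).2⟩

/-- all roots of polynomials of degree at most `d` are in `F` -/
def Adm (F : IntermediateField K Ω) (d : ℕ) : Prop :=
  ∀ g : F[X], g ≠ 0 → g.natDegree ≤ d → ∀ a : Ω, aeval a g = 0 → a ∈ F

theorem Adm.mono {F : IntermediateField K Ω} {d e : ℕ} (h : Adm F d) (hed : e ≤ d) : Adm F e :=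
  fun g h0 h1 => h g h0 (h1.trans hed)

theorem Adm.root [IsAlgClosed Ω] {F : IntermediateField K Ω} {m : ℕ} (h : Adm F m) (hm : m ≠ 0)
    {c : Ω} (hc : c ∈ F) : ∃ β ∈ F, β ^ m = c := by
  obtain ⟨β, hβ⟩ := IsAlgClosed.exists_pow_nat_eq c (Nat.pos_of_ne_zero hm)
  refine ⟨β, ?_, hβ⟩
  refine h (X ^ m - C ⟨c, hc⟩) (X_pow_sub_C_ne_zero (Nat.pos_of_ne_zero hm) _)
    (natDegree_X_pow_sub_C).le β ?_
  simp only [map_sub, map_pow, aeval_X, aeval_C, hβ]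
  exact sub_self c

theorem Adm.mono_mem [IsAlgClosed Ω] {F : IntermediateField K Ω} {m : ℕ} (h : Adm F m) (hm : m ≠ 0)
    {c : Ω} (hc : c ∈ F) {x : Ω} (hx : V.valuation (c * x ^ m) ≤ 1) :
    ∃ β ∈ F, V.valuation (β * x) ≤ 1 ∧ c * x ^ m = (β * x) ^ m := by
  obtain ⟨β, hβ, rfl⟩ := h.root hm hc
  refine ⟨β, hβ, ?_, (mul_pow _ _ _).symm⟩
  rw [← mul_pow, map_pow] at hx
  exact (pow_le_one_iff hm).mp hx

theorem Adm.pow_ne [IsAlgClosed Ω] {F : IntermediateField K Ω} {m : ℕ} (h : Adm F m) (hm : m ≠ 0)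
    {x : Ω} (hx : ∀ b ∈ F, V.valuation x ≠ V.valuation b) {c : Ω} (hc : c ∈ F) :
    V.valuation (x ^ m) ≠ V.valuation c := by
  obtain ⟨β, hβ, rfl⟩ := h.root hm hc
  intro h1
  rw [map_pow, map_pow] at h1
  exact hx β hβ ((pow_left_inj₀ zero_le zero_le hm).mp h1)

/-- dominance -/
theorem dom [IsAlgClosed Ω] {F : IntermediateField K Ω} {x : Ω}
    (hx : ∀ b ∈ F, V.valuation x ≠ V.valuation b) (g : F[X]) (hg : g ≠ 0) (h : Adm F g.natDegree) :
    ∃ k, g.coeff k ≠ 0 ∧ V.valuation (aeval x g) = V.valuation ((g.coeff k : Ω) * x ^ k) ∧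
      ∀ i, V.valuation ((g.coeff i : Ω) * x ^ i) ≤ V.valuation ((g.coeff k : Ω) * x ^ k) := by
  classical
  have hx0 : x ≠ 0 := by
    rintro rfl
    exact hx 0 F.zero_mem rfl
  obtain ⟨k, hk, hmax⟩ := g.support.exists_max_image
    (fun i => V.valuation ((g.coeff i : Ω) * x ^ i)) (support_nonempty.mpr hg)
  have hne : ∀ i ∈ g.support, ∀ j ∈ g.support, i < j →
      V.valuation ((g.coeff i : Ω) * x ^ i) ≠ V.valuation ((g.coeff j : Ω) * x ^ j) := by
    intro i hi j hj hij he
    have hj0 : (g.coeff j : Ω) ≠ 0 := by simpa using hj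
    have hjd := le_natDegree_of_mem_supp j hj
    refine (h.mono (e := j - i) (by omega)).pow_ne (by omega) hx
      (F.div_mem (g.coeff i).2 (g.coeff j).2) ?_
    have e1 : x ^ j = x ^ i * x ^ (j - i) := by rw [← pow_add]; congr 1; omega
    rw [e1, map_mul, map_mul, map_mul, mul_comm (V.valuation (x ^ i)), ← mul_assoc] at he
    have h3 := mul_right_cancel₀ ((Valuation.ne_zero_iff _).mpr (pow_ne_zero i hx0)) he
    rw [map_div₀, h3, mul_comm, mul_div_assoc, div_self ((Valuation.ne_zero_iff _).mpr hj0), mul_one]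
  have hk0 : (g.coeff k : Ω) ≠ 0 := by simpa using hk
  refine ⟨k, by simpa using hk, ?_, ?_⟩
  · have : aeval x g = ∑ i ∈ g.support, (g.coeff i : Ω) * x ^ i := by
      rw [aeval_def, eval₂_eq_sum, Polynomial.sum]
      rfl
    rw [this]
    refine Valuation.map_sum_eq_of_lt _ hk ?_
    intro i hi
    rw [Finset.mem_sdiff, Finset.mem_singleton] at hi
    refine lt_of_le_of_ne (hmax i hi.1) ?_
    rcases lt_or_gt_of_ne hi.2 with h' | h'
    · exact hne i hi.1 k hk h'
    · exact (hne k hk i hi.1 h').symm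
  · intro i
    by_cases hi : i ∈ g.support
    · exact hmax i hi
    · have : g.coeff i = 0 := by simpa using hi
      simp [this]

end Field
end H1T

namespace H1T

section Field
open Polynomial

variable {A K Ω : Type*} [CommRing A] [Field K] [Field Ω] [Algebra K Ω] [Algebra A K] [Algebra A Ω]
  [IsScalarTower A K Ω] [IsAlgClosed Ω]
variable {V : ValuationSubring Ω} {hA : ∀ a : A, algebraMap A Ω a ∈ V}

/-- immediate case -/
theorem case_imm {F F' : IntermediateField K Ω} (hF : F ≤ F') {x : Ω} (hxF : x ∉ F) (hxF' : x ∈ F')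
    (hz : ∀ z ∈ F', ∃ g h : F[X], h ≠ 0 ∧ Adm F g.natDegree ∧ Adm F h.natDegree ∧
      z * aeval x h = aeval x g)
    (hval : ∀ a ∈ F, ∃ b ∈ F, V.valuation b = V.valuation (x - a)) : Good V hA F F' := by
  let ι := {p : Ω × Ω // p.1 ∈ F ∧ p.2 ∈ F ∧ V.valuation p.2 = V.valuation (x - p.1)}
  have hxa : ∀ a ∈ F, x - a ≠ 0 := fun a ha h => hxF (by rwa [sub_eq_zero.mp h])
  have hi0 : ∀ i : ι, i.1.2 ≠ 0 := fun i h => by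
    have := i.2.2.2
    rw [h, map_zero] at this
    exact hxa _ i.2.1 ((Valuation.zero_iff _).mp this.symm)
  have : Nonempty ι := by
    obtain ⟨b, hb, h⟩ := hval 0 F.zero_mem
    exact ⟨⟨(0, b), F.zero_mem, hb, h⟩⟩
  let D : ι → Subalgebra A Ω := fun i => adj (OO V hA F) fun _ : Unit => (x - i.1.1) / i.1.2
  have hle : ∀ i j : ι, V.valuation j.1.2 ≤ V.valuation i.1.2 → D i ≤ D j := by
    intro i j hij
    refine adj_le (le_adj _ _) fun _ => ?_
    have hi := hi0 i
    have hj := hi0 j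
    have e : (x - i.1.1) / i.1.2 = (x - j.1.1) / j.1.2 * (j.1.2 / i.1.2) +
        (j.1.1 - i.1.1) / i.1.2 := by
      field_simp
      ring
    rw [e]
    have hvi : V.valuation i.1.2 ≠ 0 := (Valuation.ne_zero_iff _).mpr hi
    refine add_mem (mul_mem (self_mem_adj _ _ ()) (le_adj _ _ ?_)) (le_adj _ _ ?_)
    · rw [mem_OO']
      refine ⟨F.div_mem j.2.2.1 i.2.2.1, ?_⟩
      rw [map_div₀]
      exact (div_le_one₀ (zero_lt_iff.mpr hvi)).mpr hij
    · rw [mem_OO']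
      refine ⟨F.div_mem (F.sub_mem j.2.1 i.2.1) i.2.2.1, ?_⟩
      rw [map_div₀]
      refine (div_le_one₀ (zero_lt_iff.mpr hvi)).mpr ?_
      have e2 : j.1.1 - i.1.1 = (x - i.1.1) - (x - j.1.1) := by ring
      rw [e2]
      refine (Valuation.map_sub _ _ _).trans (max_le ?_ ?_)
      · rw [i.2.2.2]
      · rw [← j.2.2.2]; exact hij
  have hD : Directed (· ≤ ·) D := by
    intro i j
    rcases le_total (V.valuation j.1.2) (V.valuation i.1.2) with h | h
    · exact ⟨j, hle i j h, le_rfl⟩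
    · exact ⟨i, le_rfl, hle j i h⟩
  have hBC : OO V hA F ≤ ⨆ i, D i := (le_adj _ _).trans (le_iSup D this.some)
  have key : ∀ n, ∀ g : F[X], g ≠ 0 → g.natDegree = n → Adm F n → ∃ c ∈ F, c ≠ 0 ∧
      ∃ u ∈ ⨆ i, D i, V.valuation u = 1 ∧ aeval x g = c * u := by
    intro n
    induction n with
    | zero =>
      intro g hg hn _
      obtain ⟨c, rfl⟩ := natDegree_eq_zero.mp hn
      refine ⟨c, c.2, ?_, 1, one_mem _, by simp, ?_⟩
      · intro h
        exact hg (by rw [ZeroMemClass.coe_eq_zero] at h; simp [h])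
      · rw [aeval_C, mul_one]; rfl
    | succ n ih =>
      intro g hg hn had
      obtain ⟨a, ha⟩ := IsAlgClosed.exists_aeval_eq_zero Ω g (by
        intro h
        rw [natDegree_eq_zero_iff_degree_le_zero.mpr h.le] at hn
        omega)
      have haF := had g hg hn.le a ha
      obtain ⟨q, rfl⟩ : (X - C (⟨a, haF⟩ : F)) ∣ g := by
        rw [dvd_iff_isRoot, IsRoot]
        apply (algebraMap F Ω).injective
        rw [map_zero, ← ha, ← aeval_algebraMap_apply_eq_algebraMap_eval]
        rfl
      have hq : q ≠ 0 := right_ne_zero_of_mul hg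
      have hqn : q.natDegree = n := by
        rw [natDegree_mul (X_sub_C_ne_zero _) hq, natDegree_X_sub_C] at hn
        omega
      obtain ⟨c, hc, hc0, u, hu, hu1, hcu⟩ := ih q hq hqn (had.mono (by omega))
      obtain ⟨b, hb, hba⟩ := hval a haF
      let i : ι := ⟨(a, b), haF, hb, hba⟩
      have hb0 : b ≠ 0 := hi0 i
      refine ⟨b * c, F.mul_mem hb hc, mul_ne_zero hb0 hc0, (x - a) / b * u,
        mul_mem (le_iSup D i (self_mem_adj _ _ ())) hu, ?_, ?_⟩
      · rw [map_mul, hu1, map_div₀, hba, mul_one,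
          div_self ((Valuation.ne_zero_iff _).mpr (hxa a haF))]
      · rw [map_mul, hcu, map_sub, aeval_X, aeval_C]
        change (x - a) * _ = _
        field_simp
  refine Good_of_family hF D hD ?_ (fun i => le_adj _ _) (fun i => PP_one _ _) ?_
  · intro i
    refine adj_le (OO_mono hF) fun _ => ?_
    rw [mem_OO']
    refine ⟨F'.div_mem (F'.sub_mem hxF' (hF i.2.1)) (hF i.2.2.1), ?_⟩
    rw [map_div₀, i.2.2.2, div_self ((Valuation.ne_zero_iff _).mpr (hxa _ i.2.1))]
  · intro z hzO
    rw [mem_OO'] at hzO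
    obtain ⟨g, h, hh, hAg, hAh, hzgh⟩ := hz z hzO.1
    obtain ⟨c', hc', hc0', u', hu', hu1', hcu'⟩ := key _ h hh rfl hAh
    refine ⟨u', hu', hu1', ?_⟩
    by_cases hg : g = 0
    · rw [hg, map_zero, hcu'] at hzgh
      have : z * u' = 0 := by
        have : c' * (z * u') = 0 := by rw [← hzgh]; ring
        exact (mul_eq_zero.mp this).resolve_left hc0'
      rw [this]
      exact zero_mem _
    obtain ⟨c, hc, hc0, u, hu, hu1, hcu⟩ := key _ g hg rfl hAg
    rw [hcu, hcu'] at hzgh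
    have e : z * u' = c / c' * u := by
      field_simp
      rw [← hzgh]; ring
    rw [e]
    refine mul_mem (hBC ?_) hu
    rw [mem_OO']
    refine ⟨F.div_mem hc hc', ?_⟩
    have := congrArg V.valuation e
    rw [map_mul, map_mul, hu1, hu1', mul_one, mul_one] at this
    rw [← this]
    exact hzO.2

omit [IsAlgClosed Ω] in
/-- one variable family -/
theorem fam_one (F F' : IntermediateField K Ω) (hF : F ≤ F') {x : Ω} (hxF' : x ∈ F')
    (hfrac : ∀ C : Subalgebra A Ω, OO V hA F ≤ C →
      (∀ b ∈ F, V.valuation (b * x) ≤ 1 → b * x ∈ C) →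
      ∀ z ∈ OO V hA F', ∃ s ∈ C, V.valuation s = 1 ∧ z * s ∈ C) : Good V hA F F' := by
  let ι := {b : Ω // b ∈ F ∧ V.valuation (b * x) ≤ 1}
  let D : ι → Subalgebra A Ω := fun i => adj (OO V hA F) fun _ : Unit => i.1 * x
  have : Nonempty ι := ⟨⟨0, F.zero_mem, by simp⟩⟩
  have hle : ∀ i j : ι, V.valuation i.1 ≤ V.valuation j.1 → D i ≤ D j := by
    intro i j hij
    refine adj_le (le_adj _ _) fun _ => ?_
    by_cases hj : j.1 = 0
    · have hi : i.1 = 0 := by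
        rw [hj, map_zero, le_zero_iff] at hij
        exact (Valuation.zero_iff _).mp hij
      rw [hi, zero_mul]
      exact zero_mem _
    have e : i.1 * x = (i.1 / j.1) * (j.1 * x) := by field_simp
    rw [e]
    refine mul_mem (le_adj _ _ ?_) (self_mem_adj _ _ ())
    rw [mem_OO']
    refine ⟨F.div_mem i.2.1 j.2.1, ?_⟩
    rw [map_div₀]
    exact (div_le_one₀ (zero_lt_iff.mpr ((Valuation.ne_zero_iff _).mpr hj))).mpr hij
  have hD : Directed (· ≤ ·) D := by
    intro i j
    rcases le_total (V.valuation j.1) (V.valuation i.1) with h | h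
    · exact ⟨i, le_rfl, hle j i h⟩
    · exact ⟨j, hle i j h, le_rfl⟩
  refine Good_of_family hF D hD ?_ (fun i => le_adj _ _) (fun i => PP_one _ _) ?_
  · intro i
    refine adj_le (OO_mono hF) fun _ => ?_
    rw [mem_OO']
    exact ⟨F'.mul_mem (hF i.2.1) hxF', i.2.2⟩
  · refine hfrac _ ((le_adj _ _).trans (le_iSup D this.some)) ?_
    intro b hb hbx
    let i : ι := ⟨b, hb, hbx⟩
    exact le_iSup D i (self_mem_adj _ _ ())

/-- algebraic case, ramified -/
theorem case_ram_alg {F F' : IntermediateField K Ω} (hF : F ≤ F') {x : Ω} (hxF' : x ∈ F')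
    (hz : ∀ z ∈ F', ∃ g : F[X], Adm F g.natDegree ∧ z = aeval x g)
    (hx : ∀ b ∈ F, V.valuation x ≠ V.valuation b) : Good V hA F F' := by
  refine fam_one F F' hF hxF' ?_
  intro C hC hb z hzO
  refine ⟨1, one_mem _, map_one _, ?_⟩
  rw [mul_one]
  rw [mem_OO'] at hzO
  obtain ⟨g, hg, rfl⟩ := hz z hzO.1
  by_cases hg0 : g = 0
  · rw [hg0, map_zero]; exact zero_mem _
  obtain ⟨k, hk, hk1, hk2⟩ := dom hx g hg0 hg
  have : aeval x g = ∑ i ∈ g.support, (g.coeff i : Ω) * x ^ i := by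
    rw [aeval_def, eval₂_eq_sum, Polynomial.sum]
    rfl
  rw [this]
  refine sum_mem fun i hi => ?_
  have hle : V.valuation ((g.coeff i : Ω) * x ^ i) ≤ 1 := (hk2 i).trans (hk1 ▸ hzO.2)
  by_cases hi0 : i = 0
  · subst hi0
    rw [pow_zero, mul_one] at hle ⊢
    exact hC (mem_OO'.mpr ⟨(g.coeff 0).2, hle⟩)
  obtain ⟨β, hβ, h1, h2⟩ := (hg.mono (le_natDegree_of_mem_supp i hi)).mono_mem hi0 (g.coeff i).2 hle
  rw [h2]
  exact pow_mem (hb β hβ h1) _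

theorem tr_finish {F F' : IntermediateField K Ω} {x : Ω}
    (hz : ∀ z ∈ F', ∃ g h : F[X], h ≠ 0 ∧ z * aeval x h = aeval x g)
    (hAdm : ∀ d, Adm F d) (hx : ∀ b ∈ F, V.valuation x ≠ V.valuation b)
    (C : Subalgebra A Ω) (hC : OO V hA F ≤ C)
    (h1 : ∀ b ∈ F, V.valuation (b * x) ≤ 1 → b * x ∈ C)
    (h2 : ∀ b ∈ F, V.valuation (b * x⁻¹) ≤ 1 → b * x⁻¹ ∈ C) :
    ∀ z ∈ OO V hA F', ∃ s ∈ C, V.valuation s = 1 ∧ z * s ∈ C := by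
  have hx0 : x ≠ 0 := by
    rintro rfl
    exact hx 0 F.zero_mem rfl
  have hmon : ∀ c ∈ F, ∀ j : ℤ, V.valuation (c * x ^ j) ≤ 1 → c * x ^ j ∈ C := by
    intro c hc j hj
    by_cases hj0 : j = 0
    · subst hj0
      rw [zpow_zero, mul_one] at hj ⊢
      exact hC (mem_OO'.mpr ⟨hc, hj⟩)
    obtain ⟨m, rfl | rfl⟩ := j.eq_nat_or_neg
    · rw [zpow_natCast] at hj ⊢
      obtain ⟨β, hβ, h3, h4⟩ := (hAdm m).mono_mem (by simpa using hj0) hc hj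
      rw [h4]
      exact pow_mem (h1 β hβ h3) _
    · rw [zpow_neg, zpow_natCast, ← inv_pow] at hj ⊢
      obtain ⟨β, hβ, h3, h4⟩ := (hAdm m).mono_mem (by simpa using hj0) hc hj
      rw [h4]
      exact pow_mem (h2 β hβ h3) _
  have key : ∀ g : F[X], g ≠ 0 → ∃ c ∈ F, c ≠ 0 ∧ ∃ k : ℕ, ∃ u ∈ C, V.valuation u = 1 ∧
      aeval x g = c * x ^ k * u := by
    intro g hg
    obtain ⟨k, hk, hk1, hk2⟩ := dom hx g hg (hAdm _)
    have hk0 : (g.coeff k : Ω) ≠ 0 := by simpa using hk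
    have hm0 : (g.coeff k : Ω) * x ^ k ≠ 0 := mul_ne_zero hk0 (pow_ne_zero _ hx0)
    have hv0 := (Valuation.ne_zero_iff V.valuation).mpr hm0
    refine ⟨g.coeff k, (g.coeff k).2, hk0, k, aeval x g / ((g.coeff k : Ω) * x ^ k), ?_, ?_, ?_⟩
    · have : aeval x g = ∑ i ∈ g.support, (g.coeff i : Ω) * x ^ i := by
        rw [aeval_def, eval₂_eq_sum, Polynomial.sum]
        rfl
      rw [this, Finset.sum_div]
      refine sum_mem fun i hi => ?_
      have e : (g.coeff i : Ω) * x ^ i / ((g.coeff k : Ω) * x ^ k) =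
          ((g.coeff i : Ω) / g.coeff k) * x ^ ((i : ℤ) - k) := by
        rw [zpow_sub₀ hx0, zpow_natCast, zpow_natCast, mul_div_mul_comm]
      have hle : V.valuation ((g.coeff i : Ω) * x ^ i / ((g.coeff k : Ω) * x ^ k)) ≤ 1 := by
        rw [map_div₀]
        exact (div_le_one₀ (zero_lt_iff.mpr hv0)).mpr (hk2 i)
      rw [e] at hle ⊢
      exact hmon _ (F.div_mem (g.coeff i).2 (g.coeff k).2) _ hle
    · rw [map_div₀, hk1, div_self hv0]
    · field_simp
  intro z hzO
  rw [mem_OO'] at hzO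
  obtain ⟨g, h, hh, hzgh⟩ := hz z hzO.1
  obtain ⟨c', hc', hc0', k', u', hu', hu1', hcu'⟩ := key h hh
  have hn0 : c' * x ^ k' ≠ 0 := mul_ne_zero hc0' (pow_ne_zero _ hx0)
  refine ⟨u', hu', hu1', ?_⟩
  by_cases hg : g = 0
  · rw [hg, map_zero, hcu'] at hzgh
    have : z * u' = 0 := by
      have : c' * x ^ k' * (z * u') = 0 := by rw [← hzgh]; ring
      exact (mul_eq_zero.mp this).resolve_left hn0
    rw [this]
    exact zero_mem _
  obtain ⟨c, hc, hc0, k, u, hu, hu1, hcu⟩ := key g hg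
  rw [hcu, hcu'] at hzgh
  have e : z * u' = (c / c') * x ^ ((k : ℤ) - k') * u := by
    rw [zpow_sub₀ hx0, zpow_natCast, zpow_natCast]
    field_simp
    linear_combination hzgh
  rw [e]
  refine mul_mem (hmon _ (F.div_mem hc hc') _ ?_) hu
  have := congrArg V.valuation e
  rw [map_mul, map_mul _ _ u, hu1, hu1', mul_one, mul_one] at this
  rw [← this]
  exact hzO.2

omit [IsAlgClosed Ω] in
theorem transc {F : IntermediateField K Ω} (hAdm : ∀ d, Adm F d) {u : Ω} (hu : u ∉ F) :
    Transcendental (OO V hA F) u := by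
  rintro ⟨p, hp, hpu⟩
  let φ : OO V hA F →+* F :=
    { toFun := fun b => ⟨b.1, b.2.1⟩
      map_one' := rfl
      map_mul' := fun _ _ => rfl
      map_zero' := rfl
      map_add' := fun _ _ => rfl }
  have hφ : Function.Injective φ := fun a b h => Subtype.ext (congrArg (fun t : F => (t : Ω)) h)
  refine hu (hAdm _ (p.map φ) ((Polynomial.map_ne_zero_iff hφ).mpr hp) le_rfl u ?_)
  rw [aeval_def, eval₂_map]
  exact hpu

theorem case_ram_tr {F F' : IntermediateField K Ω} (hF : F ≤ F') {x : Ω} (hxF' : x ∈ F')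
    (hz : ∀ z ∈ F', ∃ g h : F[X], h ≠ 0 ∧ z * aeval x h = aeval x g)
    (hAdm : ∀ d, Adm F d) (hx : ∀ b ∈ F, V.valuation x ≠ V.valuation b) : Good V hA F F' := by
  have hfin := tr_finish (hA := hA) hz hAdm hx
  have hx0 : x ≠ 0 := by
    rintro rfl
    exact hx 0 F.zero_mem rfl
  have hxF : x ∉ F := fun h => hx x h rfl
  by_cases hb : ∃ b ∈ F, b ≠ 0 ∧ V.valuation (b * x) ≤ 1
  swap
  · push Not at hb
    refine fam_one F F' hF (F'.inv_mem hxF') fun C hC h2 => hfin C hC ?_ h2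
    intro b hbF hbx
    by_cases hb0 : b = 0
    · rw [hb0, zero_mul]; exact zero_mem _
    · exact absurd hbx (not_le.mpr (hb b hbF hb0))
  by_cases hc : ∃ b ∈ F, b ≠ 0 ∧ V.valuation (b * x⁻¹) ≤ 1
  swap
  · push Not at hc
    refine fam_one F F' hF hxF' fun C hC h1 => hfin C hC h1 ?_
    intro b hbF hbx
    by_cases hb0 : b = 0
    · rw [hb0, zero_mul]; exact zero_mem _
    · exact absurd hbx (not_le.mpr (hc b hbF hb0))
  obtain ⟨b0, hb0F, hb00, hb0⟩ := hb
  obtain ⟨c0, hc0F, hc00, hc0⟩ := hc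
  let ι₁ := {b : Ω // b ∈ F ∧ b ≠ 0 ∧ V.valuation (b * x) ≤ 1}
  let ι₂ := {b : Ω // b ∈ F ∧ b ≠ 0 ∧ V.valuation (b * x⁻¹) ≤ 1}
  let i₁ : ι₁ := ⟨b0, hb0F, hb00, hb0⟩
  let i₂ : ι₂ := ⟨c0, hc0F, hc00, hc0⟩
  let D : ι₁ × ι₂ → Subalgebra A Ω := fun i => adj (OO V hA F)
    fun t : Bool => if t then i.1.1 * x else i.2.1 * x⁻¹
  have : Nonempty (ι₁ × ι₂) := ⟨(i₁, i₂)⟩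
  have hscale : ∀ (C : Subalgebra A Ω), OO V hA F ≤ C → ∀ b ∈ F, ∀ b' ∈ F, b' ≠ 0 →
      V.valuation b ≤ V.valuation b' → ∀ y, b' * y ∈ C → b * y ∈ C := by
    intro C hC b hb b' hb' hb0 hle y hy
    have e : b * y = (b / b') * (b' * y) := by field_simp
    rw [e]
    refine mul_mem (hC ?_) hy
    rw [mem_OO']
    refine ⟨F.div_mem hb hb', ?_⟩
    rw [map_div₀]
    exact (div_le_one₀ (zero_lt_iff.mpr ((Valuation.ne_zero_iff _).mpr hb0))).mpr hle
  have hmemT : ∀ i, i.1.1 * x ∈ D i := fun i => self_mem_adj _ _ true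
  have hmemF : ∀ i, i.2.1 * x⁻¹ ∈ D i := fun i => self_mem_adj _ _ false
  have hle : ∀ i j : ι₁ × ι₂, V.valuation i.1.1 ≤ V.valuation j.1.1 →
      V.valuation i.2.1 ≤ V.valuation j.2.1 → D i ≤ D j := by
    intro i j h1 h2
    refine adj_le (le_adj _ _) fun t => ?_
    cases t
    · exact hscale _ (le_adj _ _) _ i.2.2.1 _ j.2.2.1 j.2.2.2.1 h2 _ (hmemF j)
    · exact hscale _ (le_adj _ _) _ i.1.2.1 _ j.1.2.1 j.1.2.2.1 h1 _ (hmemT j)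
  have hD : Directed (· ≤ ·) D := by
    intro i j
    rcases le_total (V.valuation i.1.1) (V.valuation j.1.1) with h | h <;>
    rcases le_total (V.valuation i.2.1) (V.valuation j.2.1) with h' | h'
    · exact ⟨(j.1, j.2), hle _ _ h h', hle _ _ le_rfl le_rfl⟩
    · exact ⟨(j.1, i.2), hle _ _ h le_rfl, hle _ _ le_rfl h'⟩
    · exact ⟨(i.1, j.2), hle _ _ le_rfl h', hle _ _ h le_rfl⟩
    · exact ⟨(i.1, i.2), hle _ _ le_rfl le_rfl, hle _ _ h h'⟩
  refine Good_of_family hF D hD ?_ (fun i => le_adj _ _) ?_ ?_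
  · intro i
    refine adj_le (OO_mono hF) fun t => ?_
    rw [mem_OO']
    cases t
    · exact ⟨F'.mul_mem (hF i.2.2.1) (F'.inv_mem hxF'), i.2.2.2.2⟩
    · exact ⟨F'.mul_mem (hF i.1.2.1) hxF', i.1.2.2.2⟩
  · intro i
    have e : i.1.1 * x * (i.2.1 * x⁻¹) = i.1.1 * i.2.1 := by field_simp
    refine PP_UW _ _ _ ?_ ?_ (transc hAdm ?_)
    · rw [mem_OO']
      constructor
      · rw [e]; exact F.mul_mem i.1.2.1 i.2.2.1
      · rw [map_mul]
        exact mul_le_one' i.1.2.2.2 i.2.2.2.2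
    · rw [e]
      exact mul_ne_zero i.1.2.2.1 i.2.2.2.1
    · intro h
      apply hxF
      have := F.div_mem h i.1.2.1
      rwa [mul_div_cancel_left₀ _ i.1.2.2.1] at this
  · refine hfin _ ((le_adj _ _).trans (le_iSup D this.some)) ?_ ?_
    · intro b hb hbx
      by_cases hb0 : b = 0
      · rw [hb0, zero_mul]; exact zero_mem _
      exact le_iSup D (⟨b, hb, hb0, hbx⟩, i₂) (hmemT _)
    · intro b hb hbx
      by_cases hb0 : b = 0
      · rw [hb0, zero_mul]; exact zero_mem _
      exact le_iSup D (i₁, ⟨b, hb, hb0, hbx⟩) (hmemF _)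

end Field
end H1T

namespace H1T

section Field
open Polynomial

variable {A K Ω : Type*} [CommRing A] [Field K] [Field Ω] [Algebra K Ω] [Algebra A K] [Algebra A Ω]
  [IsScalarTower A K Ω] [IsAlgClosed Ω]
variable {V : ValuationSubring Ω} {hA : ∀ a : A, algebraMap A Ω a ∈ V}

omit [IsAlgClosed Ω] in
theorem shift {F : IntermediateField K Ω} (g : F[X]) (x : Ω) (a : F) :
    ∃ g' : F[X], g'.natDegree = g.natDegree ∧ aeval (x - a) g' = aeval x g ∧ (g ≠ 0 → g' ≠ 0) := by
  refine ⟨g.comp (X + C a), ?_, ?_, ?_⟩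
  · rw [natDegree_comp, natDegree_X_add_C, mul_one]
  · rw [aeval_comp]
    congr 2
    rw [map_add, aeval_X, aeval_C]
    exact sub_add_cancel x (a : Ω)
  · intro h h'
    rw [comp_eq_zero_iff] at h'
    rcases h' with h' | h'
    · exact h h'
    · have := congrArg natDegree h'.2
      rw [natDegree_X_add_C, natDegree_C] at this
      omega

theorem step (V : ValuationSubring Ω) (hA : ∀ a : A, algebraMap A Ω a ∈ V)
    (F : IntermediateField K Ω) (hF : F ≠ ⊤) : ∃ F', F < F' ∧ Good V hA F F' := by
  by_cases halg : ∃ x : Ω, x ∉ F ∧ IsAlgebraic F x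
  · let S : Set ℕ := {n | ∃ x : Ω, x ∉ F ∧ IsAlgebraic F x ∧ (minpoly F x).natDegree = n}
    have hS : S.Nonempty := by
      obtain ⟨x, h1, h2⟩ := halg
      exact ⟨_, x, h1, h2, rfl⟩
    obtain ⟨x, hxF, hxa, hxn⟩ := Nat.sInf_mem hS
    have hAdm : ∀ d, d < (minpoly F x).natDegree → Adm F d := by
      intro d hd g hg hgd a ha
      by_contra haF
      have h1 : sInf S ≤ (minpoly F a).natDegree := Nat.sInf_le ⟨a, haF, ⟨g, hg, ha⟩, rfl⟩
      have h2 := natDegree_le_of_dvd (minpoly.dvd F a ha) hg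
      omega
    let F' := (IntermediateField.adjoin F {x}).restrictScalars K
    have hFF : F ≤ F' := by
      intro y hy
      exact (IntermediateField.adjoin F {x}).algebraMap_mem ⟨y, hy⟩
    have hxF' : x ∈ F' := IntermediateField.mem_adjoin_simple_self F x
    have hz : ∀ z ∈ F', ∃ g : F[X], Adm F g.natDegree ∧ z = aeval x g := by
      intro z hz
      have hz' : z ∈ (IntermediateField.adjoin F {x}).toSubalgebra := hz
      rw [IntermediateField.adjoin_simple_toSubalgebra_of_isAlgebraic hxa,
        Algebra.adjoin_singleton_eq_range_aeval] at hz'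
      obtain ⟨p, rfl⟩ := hz'
      refine ⟨p %ₘ minpoly F x, hAdm _ ?_, ?_⟩
      · exact natDegree_modByMonic_lt _ (minpoly.monic hxa.isIntegral) (minpoly.ne_one F x)
      · exact (minpoly.aeval_modByMonic_minpoly p x).symm
    refine ⟨F', lt_of_le_of_ne hFF fun h => hxF (h ▸ hxF'), ?_⟩
    by_cases hval : ∀ a ∈ F, ∃ b ∈ F, V.valuation b = V.valuation (x - a)
    · refine case_imm hFF hxF hxF' ?_ hval
      intro z hz'
      obtain ⟨g, hg, rfl⟩ := hz z hz'
      exact ⟨g, 1, one_ne_zero, hg, hg.mono (by simp), by simp⟩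
    · push Not at hval
      obtain ⟨a, ha, hab⟩ := hval
      refine case_ram_alg hFF (x := x - a) (F'.sub_mem hxF' (hFF ha)) ?_
        fun b hb h => hab b hb h.symm
      intro z hz'
      obtain ⟨g, hg, rfl⟩ := hz z hz'
      obtain ⟨g', h1, h2, -⟩ := shift g x ⟨a, ha⟩
      exact ⟨g', h1 ▸ hg, h2.symm⟩
  · push Not at halg
    have hAdm : ∀ d, Adm F d := by
      intro d g hg _ a ha
      by_contra h
      exact halg a h ⟨g, hg, ha⟩
    obtain ⟨x, hxF⟩ : ∃ x, x ∉ F := by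
      by_contra! h
      exact hF (eq_top_iff.mpr fun y _ => h y)
    let F' := (IntermediateField.adjoin F {x}).restrictScalars K
    have hFF : F ≤ F' := by
      intro y hy
      exact (IntermediateField.adjoin F {x}).algebraMap_mem ⟨y, hy⟩
    have hxF' : x ∈ F' := IntermediateField.mem_adjoin_simple_self F x
    have hz : ∀ z ∈ F', ∃ g h : F[X], h ≠ 0 ∧ z * aeval x h = aeval x g := by
      intro z hz
      obtain ⟨r, s, rfl⟩ := (IntermediateField.mem_adjoin_simple_iff F z).mp hz
      by_cases hs : aeval x s = 0
      · exact ⟨0, 1, one_ne_zero, by simp [hs]⟩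
      · exact ⟨r, s, fun h => hs (by simp [h]), div_mul_cancel₀ _ hs⟩
    refine ⟨F', lt_of_le_of_ne hFF fun h => hxF (h ▸ hxF'), ?_⟩
    by_cases hval : ∀ a ∈ F, ∃ b ∈ F, V.valuation b = V.valuation (x - a)
    · refine case_imm hFF hxF hxF' ?_ hval
      intro z hz'
      obtain ⟨g, h, hh, e⟩ := hz z hz'
      exact ⟨g, h, hh, hAdm _, hAdm _, e⟩
    · push Not at hval
      obtain ⟨a, ha, hab⟩ := hval
      refine case_ram_tr hFF (x := x - a) (F'.sub_mem hxF' (hFF ha)) ?_ hAdm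
        fun b hb h => hab b hb h.symm
      intro z hz'
      obtain ⟨g, h, hh, e⟩ := hz z hz'
      obtain ⟨g', -, h2, -⟩ := shift g x ⟨a, ha⟩
      obtain ⟨h', -, h2', h3'⟩ := shift h x ⟨a, ha⟩
      exact ⟨g', h', h3' hh, by rw [h2, h2', e]⟩

omit [IsAlgClosed Ω] in
/-- transfinite induction principle -/
theorem zorn_top (Φ : IntermediateField K Ω → Prop) (F₀ : IntermediateField K Ω) (h₀ : Φ F₀)
    (hchain : ∀ c : Set (IntermediateField K Ω), c.Nonempty → IsChain (· ≤ ·) c →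
      (∀ F ∈ c, Φ F) → Φ (sSup c))
    (hstep : ∀ F, Φ F → F ≠ ⊤ → ∃ F', F < F' ∧ Φ F') : Φ ⊤ := by
  obtain ⟨M, hM⟩ := zorn_le_nonempty₀ {F | Φ F} (by
    intro c hc hch y hy
    exact ⟨sSup c, hchain c ⟨y, hy⟩ hch hc, fun z hz => le_sSup hz⟩) F₀ h₀
  by_cases htop : M = ⊤
  · exact htop ▸ hM.2.prop
  · obtain ⟨F', h1, h2⟩ := hstep M hM.2.prop htop
    exact absurd (hM.2.le_of_ge h2 h1.le) (not_le_of_gt h1)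

omit [IsAlgClosed Ω] in
theorem mem_sSup_chain {c : Set (IntermediateField K Ω)} (hne : c.Nonempty)
    (hc : IsChain (· ≤ ·) c) {x : Ω} (hx : x ∈ sSup c) : ∃ F ∈ c, x ∈ F := by
  have : Nonempty c := hne.to_subtype
  have hd : Directed (· ≤ ·) (fun F : c => (F : IntermediateField K Ω)) := hc.directed
  have hx' : x ∈ ((⨆ F : c, (F : IntermediateField K Ω) : IntermediateField K Ω) : Set Ω) := by
    rw [← sSup_eq_iSup']; exact hx
  rw [IntermediateField.coe_iSup_of_directed hd] at hx'
  simpa using hx'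

theorem TF_top (hbot : TF (OO V hA (⊥ : IntermediateField K Ω))) :
    TF (OO V hA (⊤ : IntermediateField K Ω)) := by
  refine zorn_top (fun F => TF (OO V hA F)) ⊥ hbot ?_ ?_
  · intro c hne hc hT
    have : Nonempty c := hne.to_subtype
    refine TF_union (fun F : c => OO V hA F.1) ?_ _ (fun F => OO_mono (le_sSup F.2)) ?_
      fun F => hT F.1 F.2
    · intro F F'
      rcases hc.total F.2 F'.2 with h | h
      · exact ⟨F', OO_mono h, le_rfl⟩
      · exact ⟨F, le_rfl, OO_mono h⟩
    · intro x hx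
      obtain ⟨F, hF, hxF⟩ := mem_sSup_chain hne hc hx.1
      exact ⟨⟨F, hF⟩, hxF, hx.2⟩
  · intro F hT hF
    obtain ⟨F', h1, h2⟩ := step V hA F hF
    exact ⟨F', h1, h2.1 hT⟩

theorem inj_top (V : ValuationSubring Ω) (hA : ∀ a : A, algebraMap A Ω a ∈ V)
    (F₀ : IntermediateField K Ω) (h : OO V hA F₀ ≤ OO V hA (⊤ : IntermediateField K Ω)) :
    Function.Injective (hi h) := by
  have key := zorn_top (fun F => F₀ ≤ F ∧ ∀ h : OO V hA F₀ ≤ OO V hA F,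
    ∀ m, hi h m = 0 → m = 0) F₀ ⟨le_rfl, ?_⟩ ?_ ?_
  · exact (injective_iff_map_eq_zero _).mpr (key.2 h)
  · intro h m hm
    have : hi h m = m := hm_id m
    rwa [this] at hm
  · intro c hne hc hT
    have : Nonempty c := hne.to_subtype
    obtain ⟨F₁, hF₁⟩ := hne
    refine ⟨(hT F₁ hF₁).1.trans (le_sSup hF₁), ?_⟩
    intro h m hm
    have h01 : OO V hA F₀ ≤ OO V hA F₁ := OO_mono (hT F₁ hF₁).1
    obtain ⟨j, hij, h0⟩ := union_inj (fun F : c => OO V hA F.1) (by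
      intro F F'
      rcases hc.total F.2 F'.2 with h | h
      · exact ⟨F', OO_mono h, le_rfl⟩
      · exact ⟨F, le_rfl, OO_mono h⟩) (OO V hA (sSup c)) (fun F => OO_mono (le_sSup F.2)) (by
      intro x hx
      obtain ⟨F, hF, hxF⟩ := mem_sSup_chain ⟨F₁, hF₁⟩ hc hx.1
      exact ⟨⟨F, hF⟩, hxF, hx.2⟩) ⟨F₁, hF₁⟩ (hi h01 m) (by rw [hi_hi]; exact hm)
    rw [hi_hi] at h0
    exact (hT j.1 j.2).2 _ m h0
  · intro F hT hF
    obtain ⟨F', h1, h2⟩ := step V hA F hF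
    refine ⟨F', h1, hT.1.trans h1.le, ?_⟩
    intro h m hm
    refine hT.2 (OO_mono hT.1) m ?_
    refine (injective_iff_map_eq_zero _).mp (h2.2 (OO_mono h1.le)) _ ?_
    rw [hi_hi]
    exact hm

theorem TF_all (hbot : TF (OO V hA (⊥ : IntermediateField K Ω))) (F : IntermediateField K Ω) :
    TF (OO V hA F) := by
  have h1 := TF_top hbot
  have hle : OO V hA F ≤ OO V hA (⊤ : IntermediateField K Ω) := OO_mono le_top
  have h2 := inj_top V hA F hle
  rw [TF, Module.isTorsionFree_iff_smul_eq_zero] at h1 ⊢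
  intro r m h
  have h3 := congrArg (hi hle) h
  rw [map_zero, hm_smul] at h3
  rcases h1 _ _ h3 with h4 | h4
  · left
    exact Subalgebra.inclusion_injective hle (h4.trans (map_zero _).symm)
  · right
    exact (injective_iff_map_eq_zero _).mp h2 _ h4

end Field
end H1T

namespace H1T

section Final

theorem main0 {A K Ω R : Type*} [CommRing A] [Field K] [Field Ω] [Algebra K Ω] [Algebra A K]
    [Algebra A Ω] [IsScalarTower A K Ω] [IsAlgClosed Ω] [CommRing R] [Algebra A R]
    (V : ValuationSubring Ω) (hA : ∀ a : A, algebraMap A Ω a ∈ V)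
    (hAK : Function.Injective (algebraMap A K))
    (hbot : ∀ k : K, algebraMap K Ω k ∈ V → ∃ a : A, algebraMap A K a = k)
    (F : IntermediateField K Ω) (ρ : R →ₐ[A] Ω) (hρ : Function.Injective ρ)
    (hF : ∀ x, x ∈ F ∧ x ∈ V ↔ ∃ r, ρ r = x) (r : R) (m : Algebra.H1Cotangent A R)
    (h : r • m = 0) : r = 0 ∨ m = 0 := by
  have hb : TF (OO V hA (⊥ : IntermediateField K Ω)) := by
    have hbij : Function.Bijective (Algebra.ofId A (OO V hA (⊥ : IntermediateField K Ω))) := by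
      constructor
      · intro a b hab
        have h2 : algebraMap A Ω a = algebraMap A Ω b := congrArg Subtype.val hab
        rw [IsScalarTower.algebraMap_apply A K Ω, IsScalarTower.algebraMap_apply A K Ω] at h2
        exact hAK ((algebraMap K Ω).injective h2)
      · rintro ⟨x, hx, hxV⟩
        obtain ⟨k, rfl⟩ := IntermediateField.mem_bot.mp hx
        obtain ⟨a, rfl⟩ := hbot k hxV
        refine ⟨a, Subtype.ext ?_⟩
        exact IsScalarTower.algebraMap_apply A K Ω a
    have : Algebra.FormallySmooth A (OO V hA (⊥ : IntermediateField K Ω)) :=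
      Algebra.FormallySmooth.of_equiv (AlgEquiv.ofBijective _ hbij)
    have hs := this.subsingleton_h1Cotangent
    rw [TF, Module.isTorsionFree_iff_smul_eq_zero]
    intro r m _
    exact Or.inr (Subsingleton.elim _ _)
  have hT := TF_all hb F
  rw [TF, Module.isTorsionFree_iff_smul_eq_zero] at hT
  let e : R ≃ₐ[A] OO V hA F := AlgEquiv.ofBijective
    (ρ.codRestrict (OO V hA F) fun r => (hF _).mpr ⟨r, rfl⟩)
    ⟨fun a b hab => hρ (congrArg Subtype.val hab), fun x => by
      obtain ⟨r, hr⟩ := (hF x).mp x.2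
      exact ⟨r, Subtype.ext hr⟩⟩
  have h1 := congrArg (hm e.toAlgHom) h
  rw [hm_smul, map_zero] at h1
  rcases hT _ _ h1 with h2 | h2
  · left
    exact e.injective (h2.trans (map_zero e).symm)
  · right
    have h3 := congrArg (hm e.symm.toAlgHom) h2
    rw [map_zero, ← hm_comp] at h3
    have h4 : e.symm.toAlgHom.comp e.toAlgHom = AlgHom.id A R := by
      ext x; exact e.symm_apply_apply x
    rwa [h4, hm_id] at h3

end Final
end H1T

/-- Let `(K, v_K)` be a field with a non-trivial real-valued valuation and let
`(L, v_L)` be any field extension of `K` equipped with a real-valued valuation `v_L` extending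
`v_K`.  Let `K°` and `L°` be the corresponding rings of integers, so that `L°` is a `K°`-algebra.
Then the first André–Quillen homology `H₁(𝕃_{L°/K°})` of the cotangent complex of `K° → L°` is a
torsion-free `L°`-module: no nonzero element is annihilated by a nonzero element of `L°`. -/
theorem h1Cotangent_integers_torsionFree
    {K L : Type*} [Field K] [Field L] [Algebra K L]
    (vK : AddValuation K (WithTop ℝ)) (vL : AddValuation L (WithTop ℝ))
    (hnt : vK.IsNontrivial)
    (hext : ∀ x : K, vL (algebraMap K L x) = vK x)
    [Algebra vK.unitBall vL.unitBall]
    (hcomp : ∀ x : vK.unitBall,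
      (algebraMap vK.unitBall vL.unitBall x : L) = algebraMap K L (x : K)) :
    ∀ (r : vL.unitBall) (m : Algebra.H1Cotangent vK.unitBall vL.unitBall),
      r • m = 0 → r = 0 ∨ m = 0 := by
  have hle : ∀ x : L, x ∈ vL.unitBall ↔ 0 ≤ vL x := fun _ => Iff.rfl
  have hleK : ∀ x : K, x ∈ vK.unitBall ↔ 0 ≤ vK x := fun _ => Iff.rfl
  have hinv : ∀ x : L, x ∈ vL.unitBall ∨ x⁻¹ ∈ vL.unitBall := by
    intro x
    by_cases hx : x = 0
    · left; rw [hx]; exact zero_mem _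
    by_contra! hcon
    rw [hle, hle, not_le, not_le] at hcon
    have h1 : vL x + vL x⁻¹ = 0 := by
      rw [← AddValuation.map_mul, mul_inv_cancel₀ hx, AddValuation.map_one]
    obtain ⟨h2, h3⟩ := hcon
    have h4 : vL x + vL x⁻¹ < 0 := lt_of_le_of_lt (add_le_of_nonpos_right h3.le) h2
    rw [h1] at h4
    exact lt_irrefl _ h4
  have hVR : ValuationRing vL.unitBall :=
    { cond' := by
        rintro ⟨a, ha⟩ ⟨b, hb⟩
        by_cases ha0 : a = 0
        · exact ⟨0, Or.inr (Subtype.ext (by simp [ha0]))⟩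
        by_cases hb0 : b = 0
        · exact ⟨0, Or.inl (Subtype.ext (by simp [hb0]))⟩
        rcases hinv (b / a) with h | h
        · exact ⟨⟨b / a, h⟩, Or.inl (Subtype.ext (by
            change a * (b / a) = b
            field_simp))⟩
        · rw [inv_div] at h
          exact ⟨⟨a / b, h⟩, Or.inr (Subtype.ext (by
            change b * (a / b) = a
            field_simp))⟩ }
  have hloc : IsLocalRing vL.unitBall := inferInstance
  let Ω := AlgebraicClosure L
  obtain ⟨V, hV, hVloc⟩ := IsLocalRing.exists_factor_valuationRing
    ((algebraMap L Ω).comp vL.unitBall.subtype)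
  have hVL : ∀ x : L, algebraMap L Ω x ∈ V ↔ x ∈ vL.unitBall := by
    intro x
    constructor
    · intro hx
      rcases hinv x with h | h
      · exact h
      by_cases hx0 : x = 0
      · rw [hx0]; exact zero_mem _
      have hu : IsUnit (⟨x⁻¹, h⟩ : vL.unitBall) := by
        refine hVloc.map_nonunit _ ?_
        refine IsUnit.of_mul_eq_one ⟨algebraMap L Ω x, hx⟩ (Subtype.ext ?_)
        change algebraMap L Ω x⁻¹ * algebraMap L Ω x = 1
        rw [← map_mul, inv_mul_cancel₀ hx0, map_one]
      obtain ⟨⟨y, hy⟩, hy'⟩ := hu.exists_right_inv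
      have h2 : x⁻¹ * y = 1 := congrArg Subtype.val hy'
      have h3 : y = x := by
        field_simp at h2
        exact h2
      exact h3 ▸ hy
    · intro hx
      exact hV ⟨x, hx⟩
  have hKL : ∀ k : K, algebraMap K Ω k = algebraMap L Ω (algebraMap K L k) := fun k =>
    IsScalarTower.algebraMap_apply K L Ω k
  let ρ : vL.unitBall →ₐ[vK.unitBall] Ω :=
    { (algebraMap L Ω).comp vL.unitBall.subtype with
      commutes' := by
        intro a
        change algebraMap L Ω (algebraMap vK.unitBall vL.unitBall a : L) = algebraMap K Ω (a : K)
        rw [hcomp, hKL] }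
  have hρ : ∀ r, ρ r = algebraMap L Ω (r : L) := fun _ => rfl
  refine H1T.main0 (A := vK.unitBall) (K := K) (Ω := Ω) (R := vL.unitBall) V ?_ ?_ ?_
    (IsScalarTower.toAlgHom K L Ω).fieldRange ρ ?_ ?_
  · intro a
    change algebraMap K Ω (a : K) ∈ V
    rw [hKL, hVL, hle, hext]
    exact a.2
  · exact Subtype.val_injective
  · intro k hk
    rw [hKL, hVL, hle, hext] at hk
    exact ⟨⟨k, hk⟩, rfl⟩
  · intro a b hab
    rw [hρ, hρ] at hab
    exact Subtype.ext ((algebraMap L Ω).injective hab)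
  · intro x
    constructor
    · rintro ⟨⟨l, rfl⟩, hx⟩
      exact ⟨⟨l, (hVL l).mp hx⟩, rfl⟩
    · rintro ⟨r, rfl⟩
      exact ⟨⟨(r : L), rfl⟩, (hVL _).mpr r.2⟩
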